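/- arXiv:2601.16966 — 2 statements merged into one kernel-verified Lean document; each statement's English description precedes it below -/
import Mathlib

section
/- Let n ≥ 7 be an integer and let k ∈ {1, 2, n-3, n-2}. Let t_{n,k} ∈ (0,1) be the unique zero of f_{n,k} and set g̃(t) := ₂F₁(1, (n-4)/2; k/2; t²). Then g̃'(t_{n,k})/g̃(t_{n,k}) > ((n-2)·t_{n,k} - (k-1)·t_{n,k}⁻¹)/(1 - t_{n,k}²); that is, 4-n belongs to the admissible set A_{n,k}. -/
/-!
Put `s = t₀²`, `b = (n-4)/2`, `c = k/2` and `G = ₂F₁(1,b;c;·)`. An upper parameter of `G` is `1`, so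
`G` solves the first-order equation `s (1-s) G' = (c-1) + (b s - (c-1)) G` (`hasDerivAt_hyp`), and the
claim is equivalent to `(2s - 1) G(s) < k - 2` at the zero `s` of `F = ₂F₁((n-1)/2,-1/2;c;·)`
(`reduction`). All coefficients of `F` but the constant one are negative: `F`, or one of its partial
sums, being `≤ 0` at a point bounds the zero from above by that point (`zero_lt_of_partial`,
`zero_le_of_nonpos`). For `k > 2` the zero may be replaced by any such upper bound in `(0,1)`, as
`G` is increasing (`mono_step`).

* `k = 1` (`case_one`): three terms of `F` give `s < 7/(4(n-1)) < 1/2`, and then four terms of `G`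
  already give `(1 - 2s) G(s) > 1`.
* `k = 2` (`case_two`): the zero is below `1/2`, so `(2s - 1) G(s) < 0`.
* `k = n-3` (`case_shift_one`): `(c+1)ₘ/(c)ₘ = 1 + m/c`, so `F` is elementary in terms of
  `(1-s)^(1/2) = ∑ pₘ sᵐ` (`sqrt_series`) and its zero is `k/(k+1)`. There `G` is bounded by four
  terms and a geometric tail (`hyp_le_horner`).
* `k = n-2`: the zero tends to `1` as `k` grows, on the scale `η = s/(b(1-s))` of order one. For
  `k ≥ 12` (`case_shift_half`), `(c+1/2)ₘ/(c)ₘ ≥ √(1+m/c)` is bounded below by a quadratic polynomial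
  in `m/c`, whence the zero is at most `13c/(13c+2)` (`zero_le_shift_half`). Moreover
  `G(s) ≤ 1 + b R(η)` for a rational supersolution `R` of the limiting equation `η² R' + R = η`
  (`hyp_le_super`), and the claim becomes a polynomial inequality in `c`. For `5 ≤ k < 12` explicit
  rational upper bounds for the zero and 32 terms of the series suffice (`case_small`).
-/

/-- The Gauss hypergeometric function `₂F₁(a,b;c;s)`, defined by its power series. -/
noncomputable def hyp2F1 (a b c s : ℝ) : ℝ :=
  ∑' m : ℕ, ((ascPochhammer ℝ m).eval a * (ascPochhammer ℝ m).eval b)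
    / ((ascPochhammer ℝ m).eval c * (m.factorial : ℝ)) * s ^ m

/-- `f_{n,k}(t) := ₂F₁((n-1)/2, -1/2; k/2; t²)`. -/
noncomputable def fnk (n k : ℕ) (t : ℝ) : ℝ :=
  hyp2F1 (((n : ℝ) - 1) / 2) (-1 / 2) ((k : ℝ) / 2) (t ^ 2)

/-- `g̃_{n,k}(t) := g_{n,k,4-n}(t) = ₂F₁(1, (n-4)/2; k/2; t²)`. -/
noncomputable def gtil (n k : ℕ) (t : ℝ) : ℝ :=
  hyp2F1 1 (((n : ℝ) - 4) / 2) ((k : ℝ) / 2) (t ^ 2)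

/-! ### Coefficients and summability -/

/-- The Taylor coefficient of `₂F₁(a,b;c;·)`. -/
noncomputable def coef (a b c : ℝ) (m : ℕ) : ℝ :=
  ((ascPochhammer ℝ m).eval a * (ascPochhammer ℝ m).eval b)
    / ((ascPochhammer ℝ m).eval c * (m.factorial : ℝ))

lemma hyp2F1_eq (a b c s : ℝ) : hyp2F1 a b c s = ∑' m, coef a b c m * s ^ m := rfl

lemma coef_zero (a b c : ℝ) : coef a b c 0 = 1 := by simp [coef]

lemma coef_succ (a b : ℝ) {c : ℝ} (hc : 0 < c) (m : ℕ) :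
    coef a b c (m + 1) = coef a b c m * ((a + m) * (b + m) / ((c + m) * (m + 1))) := by
  have h1 : (ascPochhammer ℝ m).eval c ≠ 0 := (ascPochhammer_pos m c hc).ne'
  have h2 : (m.factorial : ℝ) ≠ 0 := by positivity
  have h3 : c + m ≠ 0 := by positivity
  have h4 : (m : ℝ) + 1 ≠ 0 := by positivity
  simp only [coef, ascPochhammer_succ_eval, Nat.factorial_succ]
  push_cast
  field_simp

lemma coef_pos {a b c : ℝ} (ha : 0 < a) (hb : 0 < b) (hc : 0 < c) (m : ℕ) : 0 < coef a b c m := by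
  have := ascPochhammer_pos m a ha
  have := ascPochhammer_pos m b hb
  have := ascPochhammer_pos m c hc
  unfold coef
  positivity

lemma coef_neg {a c : ℝ} (ha : 0 < a) (hc : 0 < c) (m : ℕ) : coef a (-1 / 2) c (m + 1) < 0 := by
  induction m with
  | zero =>
    rw [coef_succ _ _ hc, coef_zero]
    have : 0 < a / (2 * c) := by positivity
    have h : 1 * ((a + (0 : ℕ)) * (-1 / 2 + (0 : ℕ)) / ((c + (0 : ℕ)) * ((0 : ℕ) + 1)))
        = -(a / (2 * c)) := by
      push_cast
      field_simp
      ring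
    rw [h]
    linarith
  | succ m ih =>
    rw [coef_succ _ _ hc]
    apply mul_neg_of_neg_of_pos ih
    have : (0 : ℝ) < -1 / 2 + ((m + 1 : ℕ) : ℝ) := by push_cast; linarith [m.cast_nonneg (α := ℝ)]
    positivity

open Filter Topology in
/-- Ratio test: the ratio of consecutive terms tends to `s`. The weight `(m+1)ʲ` rather than `mʲ`
keeps the ratio defined at `m = 0`. -/
lemma summable_coef_aux (a b : ℝ) {c s : ℝ} (hc : 0 < c) (hs0 : 0 ≤ s) (hs1 : s < 1) (j : ℕ) :
    Summable fun m : ℕ => ((m : ℝ) + 1) ^ j * coef a b c m * s ^ m := by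
  have hlin (d : ℝ) : Tendsto (fun m : ℕ => (d + m) / ((m : ℝ) + 1)) atTop (𝓝 1) := by
    have h0 : Tendsto (fun m : ℕ => (d - 1) * (1 / ((m : ℝ) + 1)) + 1) atTop (𝓝 ((d - 1) * 0 + 1)) :=
      (tendsto_one_div_add_atTop_nhds_zero_nat.const_mul _).add_const _
    simp only [mul_zero, zero_add] at h0
    refine h0.congr fun m => ?_
    have : (m : ℝ) + 1 ≠ 0 := by positivity
    field_simp
    ring
  have hρ : Tendsto (fun m : ℕ => ((2 + m) / ((m : ℝ) + 1)) ^ j *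
      ((a + m) / ((m : ℝ) + 1) * ((b + m) / ((m : ℝ) + 1)) / ((c + m) / ((m : ℝ) + 1))) * s)
      atTop (𝓝 s) := by
    have := ((((hlin 2).pow j).mul (((hlin a).mul (hlin b)).div (hlin c) one_ne_zero))).mul_const s
    simpa using this
  obtain ⟨r, hr, hr1⟩ := exists_between hs1
  have hev := (hρ.abs).eventually (gt_mem_nhds (by rwa [abs_of_nonneg hs0] : |s| < r))
  apply summable_of_ratio_norm_eventually_le hr1
  filter_upwards [hev] with m hm
  have e : (((m + 1 : ℕ) : ℝ) + 1) ^ j * coef a b c (m + 1) * s ^ (m + 1) =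
      (((2 + m) / ((m : ℝ) + 1)) ^ j *
      ((a + m) / ((m : ℝ) + 1) * ((b + m) / ((m : ℝ) + 1)) / ((c + m) / ((m : ℝ) + 1))) * s) *
      (((m : ℝ) + 1) ^ j * coef a b c m * s ^ m) := by
    rw [coef_succ _ _ hc]
    have h3 : c + m ≠ 0 := by positivity
    have h4 : (m : ℝ) + 1 ≠ 0 := by positivity
    push_cast
    rw [div_pow, show (m : ℝ) + 1 + 1 = 2 + m by ring]
    field_simp
    ring
  rw [e, norm_mul, Real.norm_eq_abs]
  gcongr

lemma summable_coef_pow (a b : ℝ) {c s : ℝ} (hc : 0 < c) (hs0 : 0 ≤ s) (hs1 : s < 1) (j : ℕ) :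
    Summable fun m : ℕ => (m : ℝ) ^ j * (coef a b c m * s ^ m) := by
  refine Summable.of_norm_bounded (summable_coef_aux a b hc hs0 hs1 j).norm fun m => ?_
  rw [← mul_assoc, norm_mul, norm_mul, norm_mul, norm_mul]
  gcongr
  rw [norm_pow, norm_pow]
  gcongr
  rw [Real.norm_of_nonneg (by positivity), Real.norm_of_nonneg (by positivity)]
  linarith

lemma summable_coef (a b : ℝ) {c s : ℝ} (hc : 0 < c) (hs0 : 0 ≤ s) (hs1 : s < 1) :
    Summable fun m : ℕ => coef a b c m * s ^ m := by
  simpa using summable_coef_pow a b hc hs0 hs1 0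

/-- `M` terms of `₂F₁(a,b;c;s)` from the index `m₀` on, in Horner form and divided by the term of
index `m₀`. The factor `B` of the next term stands in for the tail: `B = 0` truncates the series. -/
noncomputable def horner (a b c s B : ℝ) : ℕ → ℕ → ℝ
  | _, 0 => B
  | m₀, M + 1 =>
    1 + (a + m₀) * (b + m₀) / ((c + m₀) * (m₀ + 1)) * s * horner a b c s B (m₀ + 1) M

lemma horner_eq (a b : ℝ) {c : ℝ} (s B : ℝ) (hc : 0 < c) (M m₀ : ℕ) :
    coef a b c m₀ * s ^ m₀ * horner a b c s B m₀ M =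
      ∑ i ∈ Finset.range M, coef a b c (m₀ + i) * s ^ (m₀ + i)
        + coef a b c (m₀ + M) * s ^ (m₀ + M) * B := by
  induction M generalizing m₀ with
  | zero => simp [horner]
  | succ M ih =>
    rw [Finset.sum_range_succ', horner]
    have := ih (m₀ + 1)
    simp only [add_assoc, add_comm 1] at this
    rw [coef_succ _ _ hc] at this
    simp only [add_zero]
    rw [add_right_comm, ← this]
    ring

/-! ### Locating the zero of `₂F₁(a,-1/2;c;·)` -/

/-- The zero of `₂F₁(a,-1/2;c;·)` lies to the left of any point where a partial sum is `≤ 0`, since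
all coefficients but the constant one are negative. -/
lemma zero_lt_of_partial {a c : ℝ} (ha : 0 < a) (hc : 0 < c) {s₀ s₁ : ℝ} (h0 : 0 < s₀) (h1 : s₀ < 1)
    (hz : hyp2F1 a (-1 / 2) c s₀ = 0) (hs₁ : 0 ≤ s₁) (M : ℕ)
    (hM : horner a (-1 / 2) c s₁ 0 0 (M + 1) ≤ 0) : s₀ < s₁ := by
  by_contra! hle
  have hsum := horner_eq a (-1 / 2) s₁ 0 hc (M + 1) 0
  simp only [coef_zero, pow_zero, one_mul, zero_add, mul_zero, add_zero] at hsum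
  rw [hsum] at hM
  have hS := summable_coef a (-1 / 2) hc h0.le h1
  have h := hS.sum_add_tsum_nat_add (M + 1)
  rw [← hyp2F1_eq, hz] at h
  have hcmp : ∑ i ∈ Finset.range (M + 1), coef a (-1 / 2) c i * s₀ ^ i ≤
      ∑ i ∈ Finset.range (M + 1), coef a (-1 / 2) c i * s₁ ^ i := by
    apply Finset.sum_le_sum
    rintro (_ | i) _
    · simp
    · exact mul_le_mul_of_nonpos_left (pow_le_pow_left₀ hs₁ hle _) (coef_neg ha hc i).le
  have htail : 0 < ∑' i, -(coef a (-1 / 2) c (i + (M + 1)) * s₀ ^ (i + (M + 1))) := by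
    have hpos (i : ℕ) : 0 < -(coef a (-1 / 2) c (i + (M + 1)) * s₀ ^ (i + (M + 1))) := by
      have h2 := mul_neg_of_neg_of_pos (coef_neg ha hc (i + M)) (pow_pos h0 (i + M + 1))
      rw [← add_assoc]
      linarith
    exact ((summable_nat_add_iff (M + 1)).2 hS).neg.tsum_pos (fun i => (hpos i).le) 0 (hpos 0)
  rw [tsum_neg] at htail
  linarith

lemma zero_le_of_nonpos {a c : ℝ} (ha : 0 < a) (hc : 0 < c) {s₀ s₁ : ℝ} (h1 : s₀ < 1)
    (hz : hyp2F1 a (-1 / 2) c s₀ = 0) (hs₁ : 0 ≤ s₁)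
    (hM : hyp2F1 a (-1 / 2) c s₁ ≤ 0) : s₀ ≤ s₁ := by
  by_contra! hlt
  have hcmp : hyp2F1 a (-1 / 2) c s₀ < hyp2F1 a (-1 / 2) c s₁ := by
    rw [hyp2F1_eq, hyp2F1_eq]
    refine Summable.tsum_lt_tsum (i := 1) (fun m => ?_) ?_
      (summable_coef a (-1 / 2) hc (hs₁.trans hlt.le) h1) (summable_coef a (-1 / 2) hc hs₁ (hlt.trans h1))
    · rcases m with _ | m
      · simp
      · exact mul_le_mul_of_nonpos_left (pow_le_pow_left₀ hs₁ hlt.le _) (coef_neg ha hc m).le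
    · have := coef_neg ha hc 0
      simp only [pow_one]
      exact mul_lt_mul_of_neg_left hlt this
  linarith

/-! ### The zero for `a = c + 1` and `a = c + 1/2` -/

/-- With `P`, `P₁`, `P₂` the sums `∑ mʲ pₘ sᵐ`, where `∑ pₘ sᵐ = (1 - s)^(1/2)`: the recurrence of `pₘ`
expresses `P₁` and `P₂` through `P`, and `P ≥ 0` because the partial sums of `pₘ` are positive. -/
lemma sqrt_series {s : ℝ} (hs0 : 0 ≤ s) (hs1 : s < 1) :
    let P := fun j : ℕ => ∑' m : ℕ, (m : ℝ) ^ j * (coef 1 (-1 / 2) 1 m * s ^ m)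
    0 ≤ P 0 ∧ (1 - s) * P 1 = -(s / 2) * P 0 ∧ (1 - s) * P 2 = s * (P 1 / 2 - P 0 / 2) := by
  intro P
  have hS (j : ℕ) := summable_coef_pow 1 (-1 / 2) one_pos hs0 hs1 j
  have hrec (m : ℕ) :
      ((m : ℝ) + 1) * coef 1 (-1 / 2) 1 (m + 1) = (m - 1 / 2) * coef 1 (-1 / 2) 1 m := by
    rw [coef_succ _ _ one_pos]
    have h4 : (m : ℝ) + 1 ≠ 0 := by positivity
    field_simp
    ring
  refine ⟨?_, ?_, ?_⟩
  · have hpart (M : ℕ) : ∑ m ∈ Finset.range (M + 1), coef 1 (-1 / 2) 1 m =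
        -2 * ((M + 1) * coef 1 (-1 / 2) 1 (M + 1)) := by
      induction M with
      | zero => rw [hrec]; simp [coef_zero]
      | succ M ih =>
        rw [Finset.sum_range_succ, ih]
        have := hrec (M + 1)
        push_cast at this ⊢
        rw [this]
        ring
    have h0 : Filter.Tendsto (fun M => ∑ m ∈ Finset.range (M + 1), coef 1 (-1 / 2) 1 m * s ^ m)
        Filter.atTop (nhds (P 0)) := by
      have := (hS 0).hasSum.tendsto_sum_nat
      simp only [pow_zero, one_mul] at this
      have h2 := (Filter.tendsto_add_atTop_iff_nat 1).2 this
      simpa [P] using h2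
    refine ge_of_tendsto' h0 fun M => ?_
    have h1 : ∑ m ∈ Finset.range (M + 1), coef 1 (-1 / 2) 1 m ≤
        ∑ m ∈ Finset.range (M + 1), coef 1 (-1 / 2) 1 m * s ^ m := by
      apply Finset.sum_le_sum
      rintro (_ | m) _
      · simp
      · nlinarith [coef_neg one_pos one_pos m, pow_le_one₀ hs0 hs1.le (n := m + 1)]
    have h2 := mul_neg_of_pos_of_neg (by positivity : (0 : ℝ) < M + 1) (coef_neg one_pos one_pos M)
    rw [hpart] at h1
    linarith
  · have h : P 1 = s * (P 1 - P 0 / 2) := by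
      calc P 1 = ∑' m : ℕ, s * ((m : ℝ) ^ 1 * (coef 1 (-1 / 2) 1 m * s ^ m)
            - (m : ℝ) ^ 0 * (coef 1 (-1 / 2) 1 m * s ^ m) / 2) := by
            simp only [P]
            rw [(hS 1).tsum_eq_zero_add]
            simp only [Nat.cast_zero, pow_one, zero_mul, zero_add]
            congr 1
            ext m
            push_cast
            rw [← mul_assoc, hrec]
            ring
        _ = _ := by rw [tsum_mul_left, (hS 1).tsum_sub ((hS 0).div_const 2), tsum_div_const]
    linarith
  · have h : P 2 = s * (P 2 + P 1 / 2 - P 0 / 2) := by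
      calc P 2 = ∑' m : ℕ, s * ((m : ℝ) ^ 2 * (coef 1 (-1 / 2) 1 m * s ^ m)
            + (m : ℝ) ^ 1 * (coef 1 (-1 / 2) 1 m * s ^ m) / 2
            - (m : ℝ) ^ 0 * (coef 1 (-1 / 2) 1 m * s ^ m) / 2) := by
            simp only [P]
            rw [(hS 2).tsum_eq_zero_add]
            simp only [Nat.cast_zero, ne_eq, OfNat.ofNat_ne_zero, not_false_eq_true, zero_pow,
              zero_mul, zero_add]
            congr 1
            ext m
            push_cast
            rw [sq, mul_assoc, ← mul_assoc _ (coef _ _ _ _), hrec]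
            ring
        _ = _ := by
            rw [tsum_mul_left, ((hS 2).add ((hS 1).div_const 2)).tsum_sub ((hS 0).div_const 2),
              (hS 2).tsum_add ((hS 1).div_const 2), tsum_div_const, tsum_div_const]
    linarith

lemma coef_shift_one {c : ℝ} (hc : 0 < c) (m : ℕ) :
    coef (c + 1) (-1 / 2) c m = (1 + m / c) * coef 1 (-1 / 2) 1 m := by
  induction m with
  | zero => simp [coef_zero]
  | succ m ih =>
    rw [coef_succ _ _ hc, coef_succ _ _ one_pos, ih]
    have h3 : c + m ≠ 0 := by positivity
    have h4 : (m : ℝ) + 1 ≠ 0 := by positivity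
    have h5 : 1 + (m : ℝ) ≠ 0 := by positivity
    push_cast
    field_simp
    ring

/-- The ratio `(c+1/2)ₘ/(c)ₘ` is at least `√(1+m/c)`. -/
lemma coef_shift_half {c : ℝ} (hc : 0 < c) (m : ℕ) :
    ∃ Q : ℝ, 0 ≤ Q ∧ 1 + m / c ≤ Q ^ 2 ∧
      coef (c + 1 / 2) (-1 / 2) c m = Q * coef 1 (-1 / 2) 1 m := by
  induction m with
  | zero => exact ⟨1, by norm_num, by simp, by simp [coef_zero]⟩
  | succ m ih =>
    obtain ⟨Q, h0, h1, h2⟩ := ih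
    have h3 : 0 < c + m := by positivity
    have h4 : (m : ℝ) + 1 ≠ 0 := by positivity
    have h5 : 1 + (m : ℝ) ≠ 0 := by positivity
    refine ⟨Q * ((c + 1 / 2 + m) / (c + m)), by positivity, ?_, ?_⟩
    · have e : (1 + ((m + 1 : ℕ) : ℝ) / c) = (1 + m / c) * ((c + m + 1) / (c + m)) := by
        push_cast
        field_simp
        ring
      rw [e, mul_pow]
      have : (c + m + 1) / (c + m) ≤ ((c + 1 / 2 + m) / (c + m)) ^ 2 := by
        rw [div_pow, div_le_div_iff₀ h3 (by positivity)]
        nlinarith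
      gcongr
    · rw [coef_succ _ _ hc, coef_succ _ _ one_pos, h2]
      have h3' := h3.ne'
      field_simp

/-- A quadratic minorant of the square root, nearly tangent around `u = 3.5`. -/
lemma quad_le_of_sq {u Q : ℝ} (hu : 0 ≤ u) (hQ : 0 ≤ Q) (h : 1 + u ≤ Q ^ 2) :
    1 + 2 / 5 * u - 3 / 125 * u ^ 2 ≤ Q := by
  by_contra! hlt
  have hu26 : u ≤ 26 := by nlinarith
  have h1 : Q ^ 2 < (1 + 2 / 5 * u - 3 / 125 * u ^ 2) ^ 2 := by gcongr
  have h2 : 0 ≤ u * ((u - 69 / 20) ^ 2 * (26 - u)) := by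
    have : 0 ≤ 26 - u := by linarith
    positivity
  nlinarith [mul_nonneg hu (sq_nonneg (u - 69 / 20))]

/-- For `c = k/2`, `a = c + 1`, the zero is at most (in fact equal to) `k/(k+1)`. -/
lemma zero_le_shift_one {c s₀ : ℝ} (hc : 0 < c) (h1 : s₀ < 1)
    (hz : hyp2F1 (c + 1) (-1 / 2) c s₀ = 0) : s₀ ≤ 2 * c / (2 * c + 1) := by
  have hs0 : 0 ≤ 2 * c / (2 * c + 1) := by positivity
  have hs1 : 2 * c / (2 * c + 1) < 1 := by rw [div_lt_one (by positivity)]; linarith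
  have e : 1 - 2 * c / (2 * c + 1) = 1 / (2 * c + 1) := by field_simp; ring
  refine zero_le_of_nonpos (by positivity) hc h1 hz hs0 ?_
  obtain ⟨-, hP1, -⟩ := sqrt_series hs0 hs1
  have hS (j : ℕ) := summable_coef_pow 1 (-1 / 2) one_pos hs0 hs1 j
  rw [hyp2F1_eq]
  calc _ = ∑' m : ℕ, ((m : ℝ) ^ 0 * (coef 1 (-1 / 2) 1 m * (2 * c / (2 * c + 1)) ^ m)
        + (m : ℝ) ^ 1 * (coef 1 (-1 / 2) 1 m * (2 * c / (2 * c + 1)) ^ m) / c) := by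
        congr 1; ext m; rw [coef_shift_one hc]; ring
    _ ≤ 0 := by
        rw [(hS 0).tsum_add ((hS 1).div_const c), tsum_div_const]
        rw [e] at hP1
        field_simp at hP1 ⊢
        linarith

/-- Bounding the ratio in `coef_shift_half` below by `quad_le_of_sq` with `u = m/c` bounds the series
above by a combination of `P 0`, `P 1`, `P 2` from `sqrt_series`. At the given point it is
`P 0 * (-93/2000 + 39/(500c))`, which is nonpositive for `c ≥ 6`. -/
lemma zero_le_shift_half {c s₀ : ℝ} (hc : 6 ≤ c) (h1 : s₀ < 1)
    (hz : hyp2F1 (c + 1 / 2) (-1 / 2) c s₀ = 0) : s₀ ≤ 13 * c / (13 * c + 2) := by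
  have hc0 : 0 < c := by linarith
  have hs0 : 0 ≤ 13 * c / (13 * c + 2) := by positivity
  have hs1 : 13 * c / (13 * c + 2) < 1 := by rw [div_lt_one (by positivity)]; linarith
  have e : 1 - 13 * c / (13 * c + 2) = 2 / (13 * c + 2) := by field_simp; ring
  refine zero_le_of_nonpos (by positivity) hc0 h1 hz hs0 ?_
  obtain ⟨hP0, hP1, hP2⟩ := sqrt_series hs0 hs1
  have hS (j : ℕ) := summable_coef_pow 1 (-1 / 2) one_pos hs0 hs1 j
  have hS' := summable_coef (c + 1 / 2) (-1 / 2) hc0 hs0 hs1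
  rw [e] at hP1 hP2
  have aux (A B : ℝ) (h : 2 / (13 * c + 2) * A = 13 * c / (13 * c + 2) * B) :
      A = 13 * c / 2 * B := by
    field_simp at h ⊢
    linarith
  have aux' (A B : ℝ) (h : 2 / (13 * c + 2) * A = -(13 * c / (13 * c + 2) / 2) * B) :
      A = 13 * c / 2 * (-(1 / 2) * B) := aux _ _ (h.trans (by ring))
  replace hP1 := aux' _ _ hP1
  replace hP2 := aux _ _ hP2
  beta_reduce at hP0 hP1 hP2
  rw [hyp2F1_eq]
  calc _ ≤ ∑' m : ℕ, ((m : ℝ) ^ 0 * (coef 1 (-1 / 2) 1 m * (13 * c / (13 * c + 2)) ^ m)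
        + 2 / (5 * c) * ((m : ℝ) ^ 1 * (coef 1 (-1 / 2) 1 m * (13 * c / (13 * c + 2)) ^ m))
        - 3 / (125 * c ^ 2) *
          ((m : ℝ) ^ 2 * (coef 1 (-1 / 2) 1 m * (13 * c / (13 * c + 2)) ^ m))) := by
        refine hS'.tsum_le_tsum (fun m => ?_)
          (((hS 0).add ((hS 1).mul_left _)).sub ((hS 2).mul_left _))
        rcases m with _ | m
        · simp [coef_zero]
        obtain ⟨Q, h0, h2, h3⟩ := coef_shift_half hc0 (m + 1)
        have h4 := quad_le_of_sq (by positivity) h0 h2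
        have h5 := coef_neg one_pos one_pos m
        rw [h3]
        calc _ ≤ (1 + 2 / 5 * (((m + 1 : ℕ) : ℝ) / c) - 3 / 125 * (((m + 1 : ℕ) : ℝ) / c) ^ 2)
              * coef 1 (-1 / 2) 1 (m + 1) * (13 * c / (13 * c + 2)) ^ (m + 1) := by
              gcongr ?_ * _
              exact mul_le_mul_of_nonpos_right h4 h5.le
          _ = _ := by field_simp
    _ ≤ 0 := by
        rw [((hS 0).add ((hS 1).mul_left _)).tsum_sub ((hS 2).mul_left _),
          (hS 0).tsum_add ((hS 1).mul_left _), tsum_mul_left, tsum_mul_left, hP2, hP1]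
        generalize ∑' m : ℕ, (m : ℝ) ^ 0 * (coef 1 (-1 / 2) 1 m * (13 * c / (13 * c + 2)) ^ m) = P
          at *
        have e2 : P + 2 / (5 * c) * (13 * c / 2 * (-(1 / 2) * P)) -
            3 / (125 * c ^ 2) * (13 * c / 2 * (13 * c / 2 * (-(1 / 2) * P) / 2 - P / 2)) =
            P * (-93 / 2000 + 39 / (500 * c)) := by
          field_simp
          ring
        rw [e2]
        refine mul_nonpos_of_nonneg_of_nonpos hP0 ?_
        have : 39 / (500 * c) ≤ 93 / 2000 := by
          rw [div_le_div_iff₀ (by positivity) (by norm_num)]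
          linarith
        linarith

/-! ### The function `₂F₁(1,b;c;·)` -/

/-- `G = ₂F₁(1,b;c;·)` satisfies a first-order linear differential equation. -/
lemma hasDerivAt_hyp (b : ℝ) {c s : ℝ} (hc : 0 < c) (hs0 : 0 ≤ s) (hs1 : s < 1) :
    ∃ D, HasDerivAt (hyp2F1 1 b c) D s ∧
      s * (1 - s) * D = (c - 1) + (b * s - (c - 1)) * hyp2F1 1 b c s := by
  obtain ⟨r, hsr, hr1⟩ := exists_between hs1
  have hr0 : 0 < r := hs0.trans_lt hsr
  have hu : Summable fun n : ℕ => ‖(n : ℝ) * coef 1 b c n * r ^ (n - 1)‖ := by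
    rw [← summable_nat_add_iff 1]
    have h := (summable_nat_add_iff 1).2 ((summable_coef_pow 1 b hc hr0.le hr1 1).norm.mul_left r⁻¹)
    refine h.congr fun m => ?_
    simp only [norm_mul, norm_pow, pow_one, Nat.add_sub_cancel, Real.norm_of_nonneg hr0.le]
    field_simp
    ring
  have hd := hasDerivAt_tsum_of_isPreconnected (𝕜 := ℝ) (t := Set.Ioo (-r) r)
    (g := fun n y => coef 1 b c n * y ^ n)
    (g' := fun n y => coef 1 b c n * (n * y ^ (n - 1))) (y₀ := s) (y := s) hu isOpen_Ioo
    isPreconnected_Ioo (fun n y _ => (hasDerivAt_pow n y).const_mul _)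
    (fun n y hy => by
      have : ‖y‖ ≤ r := abs_le.2 ⟨hy.1.le, hy.2.le⟩
      rw [← mul_assoc, mul_comm (coef _ _ _ _), norm_mul, norm_mul _ (r ^ _), norm_pow, norm_pow,
        Real.norm_of_nonneg hr0.le]
      gcongr)
    ⟨by linarith, hsr⟩ (summable_coef 1 b hc hs0 hs1) ⟨by linarith, hsr⟩
  refine ⟨_, hd, ?_⟩
  have hS0 := summable_coef 1 b hc hs0 hs1
  have hS1 := summable_coef_pow 1 b hc hs0 hs1 1
  have hsD : s * ∑' n, coef 1 b c n * (n * s ^ (n - 1)) =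
      ∑' m : ℕ, (m : ℝ) ^ 1 * (coef 1 b c m * s ^ m) := by
    rw [← tsum_mul_left]
    congr 1
    ext m
    rcases m with _ | m
    · simp
    · simp only [Nat.add_sub_cancel]; ring
  have hA := hS0.tsum_eq_zero_add
  have hB := hS1.tsum_eq_zero_add
  rw [← hyp2F1_eq] at hA
  simp only [coef_zero, pow_zero, one_mul, Nat.cast_zero, pow_one, zero_mul, zero_add] at hA hB
  rw [hyp2F1_eq] at *
  have key : (c - 1) * ∑' m, coef 1 b c (m + 1) * s ^ (m + 1) +
      ∑' m : ℕ, ((m + 1 : ℕ) : ℝ) * (coef 1 b c (m + 1) * s ^ (m + 1)) =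
      s * (b * (∑' m, coef 1 b c m * s ^ m) + ∑' m : ℕ, (m : ℝ) ^ 1 * (coef 1 b c m * s ^ m)) := by
    rw [← tsum_mul_left, ← tsum_mul_left, ← hS0.mul_left b |>.tsum_add hS1, ← tsum_mul_left,
      ← Summable.tsum_add]
    · congr 1
      ext m
      rw [coef_succ _ _ hc]
      have h3 : c + m ≠ 0 := by positivity
      have h4 : (m : ℝ) + 1 ≠ 0 := by positivity
      push_cast
      field_simp
      ring
    · exact ((summable_nat_add_iff 1).2 hS0).mul_left _
    · simpa using (summable_nat_add_iff 1).2 hS1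
  simp only [pow_one] at *
  rw [mul_right_comm, hsD]
  rw [← hB] at key
  have : ∑' m, coef 1 b c (m + 1) * s ^ (m + 1) = ∑' m, coef 1 b c m * s ^ m - 1 := by linarith
  rw [this] at key
  linarith

lemma one_le_hyp {b c s : ℝ} (hb : 0 < b) (hc : 0 < c) (hs0 : 0 ≤ s) (hs1 : s < 1) :
    1 ≤ hyp2F1 1 b c s := by
  rw [hyp2F1_eq, (summable_coef 1 b hc hs0 hs1).tsum_eq_zero_add]
  have : 0 ≤ ∑' m, coef 1 b c (m + 1) * s ^ (m + 1) :=
    tsum_nonneg fun m => mul_nonneg (coef_pos one_pos hb hc _).le (by positivity)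
  simp only [coef_zero, pow_zero, one_mul]
  linarith

lemma hyp_mono {b c s s' : ℝ} (hb : 0 < b) (hc : 0 < c) (hs0 : 0 ≤ s) (hs : s ≤ s') (hs1 : s' < 1) :
    hyp2F1 1 b c s ≤ hyp2F1 1 b c s' := by
  rw [hyp2F1_eq, hyp2F1_eq]
  refine (summable_coef 1 b hc hs0 (hs.trans_lt hs1)).tsum_le_tsum (fun m => ?_)
    (summable_coef 1 b hc (hs0.trans hs) hs1)
  have := coef_pos one_pos hb hc m
  gcongr

lemma horner_le_hyp {b c s : ℝ} (hb : 0 < b) (hc : 0 < c) (hs0 : 0 ≤ s) (hs1 : s < 1) (M : ℕ) :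
    horner 1 b c s 0 0 M ≤ hyp2F1 1 b c s := by
  have h := horner_eq 1 b s 0 hc M 0
  simp only [coef_zero, pow_zero, one_mul, zero_add, mul_zero, add_zero] at h
  rw [h, hyp2F1_eq]
  exact (summable_coef 1 b hc hs0 hs1).sum_le_tsum _
    fun m _ => mul_nonneg (coef_pos one_pos hb hc _).le (by positivity)

/-- For `b ≤ c` the coefficients decrease, so the tail is dominated by a geometric series. -/
lemma hyp_le_horner {b c s : ℝ} (hb : 0 < b) (hbc : b ≤ c) (hs0 : 0 ≤ s) (hs1 : s < 1) (M : ℕ) :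
    hyp2F1 1 b c s ≤ horner 1 b c s (1 / (1 - s)) 0 M := by
  have hc : 0 < c := hb.trans_le hbc
  have h := horner_eq 1 b s (1 / (1 - s)) hc M 0
  simp only [coef_zero, pow_zero, one_mul, zero_add] at h
  have hanti : Antitone (coef 1 b c) := by
    refine antitone_nat_of_succ_le fun m => ?_
    rw [coef_succ _ _ hc]
    have h0 := (coef_pos one_pos hb hc m).le
    apply mul_le_of_le_one_right h0
    rw [div_le_one (by positivity)]
    nlinarith [m.cast_nonneg (α := ℝ)]
  have hS := summable_coef 1 b hc hs0 hs1
  have hg := (summable_geometric_of_lt_one hs0 hs1).mul_left (coef 1 b c M * s ^ M)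
  have ht : ∑' i, coef 1 b c (i + M) * s ^ (i + M) ≤ coef 1 b c M * s ^ M * (1 / (1 - s)) := by
    rw [one_div, ← tsum_geometric_of_lt_one hs0 hs1, ← tsum_mul_left]
    refine ((summable_nat_add_iff M).2 hS).tsum_le_tsum (fun i => ?_) hg
    rw [pow_add, mul_comm (s ^ i), ← mul_assoc]
    gcongr
    exact hanti (Nat.le_add_left _ _)
  rw [h, hyp2F1_eq, ← hS.sum_add_tsum_nat_add M]
  gcongr

/-- By the differential equation for `g̃`, the claim amounts to `(2s - 1) g̃ < k - 2` at
`s = t₀²`. -/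
lemma reduction {n k : ℕ} (hn : 7 ≤ n) (hk : 1 ≤ k) {t : ℝ} (ht : t ∈ Set.Ioo (0 : ℝ) 1)
    (h : (2 * t ^ 2 - 1) * hyp2F1 1 (((n : ℝ) - 4) / 2) ((k : ℝ) / 2) (t ^ 2) < k - 2) :
    deriv (gtil n k) t / gtil n k t
      > (((n : ℝ) - 2) * t - ((k : ℝ) - 1) * t⁻¹) / (1 - t ^ 2) := by
  have hn' : (7 : ℝ) ≤ n := by exact_mod_cast hn
  have hk' : (1 : ℝ) ≤ k := by exact_mod_cast hk
  obtain ⟨ht0, ht1⟩ := ht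
  have hs1 : t ^ 2 < 1 := by nlinarith
  have hs0 : 0 ≤ t ^ 2 := by positivity
  have hc : 0 < (k : ℝ) / 2 := by positivity
  have hb : 0 < ((n : ℝ) - 4) / 2 := by linarith
  obtain ⟨D, hD, hode⟩ := hasDerivAt_hyp (((n : ℝ) - 4) / 2) hc hs0 hs1
  have hd : HasDerivAt (gtil n k) (D * (2 * t)) t := by
    have := HasDerivAt.comp (h := fun x : ℝ => x ^ 2) t hD (hasDerivAt_pow 2 t)
    norm_num [Function.comp_def] at this
    exact this
  have hG := one_le_hyp hb hc hs0 hs1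
  rw [hd.deriv, gtil]
  generalize hyp2F1 1 (((n : ℝ) - 4) / 2) ((k : ℝ) / 2) (t ^ 2) = G at *
  have h1 : 0 < 1 - t ^ 2 := by linarith
  have hG0 : 0 < G := by linarith
  rw [gt_iff_lt, div_lt_div_iff₀ h1 hG0]
  have e : D * (2 * t) * (1 - t ^ 2) = 2 * (t ^ 2 * (1 - t ^ 2) * D) * t⁻¹ := by field_simp
  rw [e, hode]
  have e2 : ((n : ℝ) - 2) * t - ((k : ℝ) - 1) * t⁻¹ = ((n - 2) * t ^ 2 - (k - 1)) * t⁻¹ := by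
    field_simp
  rw [e2, mul_right_comm]
  apply mul_lt_mul_of_pos_right _ (inv_pos.2 ht0)
  linarith

/-! ### The cases `k = 1` and `k = 2` -/

/-- In the variable `y = s (b + 3/2)` the zero satisfies `y < 7/8`, and with `b = 3/2 + d`, `d ≥ 0`,
four terms of the series give an expression in `d` whose coefficients are positive for such `y`. -/
lemma case_one {b s : ℝ} (hb : 3 / 2 ≤ b) (hs0 : 0 < s) (hs1 : s < 1)
    (hz : hyp2F1 (b + 3 / 2) (-1 / 2) (1 / 2) s = 0) :
    (2 * s - 1) * hyp2F1 1 b (1 / 2) s < -1 := by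
  have hlt : s < 7 / (8 * (b + 3 / 2)) := by
    refine zero_lt_of_partial (by linarith) (by norm_num) hs0 hs1 hz (by positivity) 2 ?_
    have e : horner (b + 3 / 2) (-1 / 2) (1 / 2) (7 / (8 * (b + 3 / 2))) 0 0 (2 + 1) =
        1 - 7 / 8 - 49 / 384 - 49 / (384 * (b + 3 / 2)) := by
      norm_num [horner]
      field_simp
      ring
    have : 0 < 49 / (384 * (b + 3 / 2)) := by positivity
    rw [e]
    linarith
  have hy : s * (b + 3 / 2) < 7 / 8 := by
    rw [lt_div_iff₀ (by positivity)] at hlt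
    linarith
  have hG := horner_le_hyp (b := b) (by linarith) (by norm_num : (0 : ℝ) < 1 / 2) hs0.le hs1 4
  have e : horner 1 b (1 / 2) s 0 0 4 = 1 + 2 * b * s + 4 / 3 * b * (b + 1) * s ^ 2
      + 8 / 15 * b * (b + 1) * (b + 2) * s ^ 3 := by
    norm_num [horner]
    ring
  rw [e] at hG
  have h2s : 0 < 1 - 2 * s := by nlinarith
  have hmul := mul_le_mul_of_nonneg_left hG h2s.le
  obtain ⟨d, rfl⟩ : ∃ d, b = 3 / 2 + d := ⟨b - 3 / 2, by ring⟩
  have hd : 0 ≤ d := by linarith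
  set y := s * (3 / 2 + d + 3 / 2) with hydef
  have hy0 : 0 < y := by positivity
  have hsy : s = y / (d + 3) := by rw [hydef]; field_simp; ring
  have hpos : 0 < (1 - 2 * s) * (1 + 2 * (3 / 2 + d) * s
      + 4 / 3 * (3 / 2 + d) * (3 / 2 + d + 1) * s ^ 2
      + 8 / 15 * (3 / 2 + d) * (3 / 2 + d + 1) * (3 / 2 + d + 2) * s ^ 3) - 1 := by
    have hy2 : y ^ 2 < 49 / 64 := by nlinarith
    have hy3 : y ^ 3 < 343 / 512 := by nlinarith
    -- the coefficients of the powers of `d` after clearing denominators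
    have c0 : 0 < 27 - 9 * y - 9 * y ^ 2 - 14 * y ^ 3 := by linarith
    have c1 : 0 < 81 + 6 * y - 33 / 5 * y ^ 2 - 284 / 15 * y ^ 3 := by linarith
    have c2 : 0 < 63 + 19 * y + 14 / 5 * y ^ 2 - 8 * y ^ 3 := by nlinarith
    have c3 : 0 < 19 + 28 / 3 * y + 44 / 15 * y ^ 2 - 16 / 15 * y ^ 3 := by nlinarith
    have e2 : (1 - 2 * s) * (1 + 2 * (3 / 2 + d) * s
      + 4 / 3 * (3 / 2 + d) * (3 / 2 + d + 1) * s ^ 2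
      + 8 / 15 * (3 / 2 + d) * (3 / 2 + d + 1) * (3 / 2 + d + 2) * s ^ 3) - 1 =
        y / (d + 3) ^ 4 * ((27 - 9 * y - 9 * y ^ 2 - 14 * y ^ 3)
          + d * (81 + 6 * y - 33 / 5 * y ^ 2 - 284 / 15 * y ^ 3)
          + d ^ 2 * (63 + 19 * y + 14 / 5 * y ^ 2 - 8 * y ^ 3)
          + d ^ 3 * (19 + 28 / 3 * y + 44 / 15 * y ^ 2 - 16 / 15 * y ^ 3)
          + d ^ 4 * (2 + 4 / 3 * y + 8 / 15 * y ^ 2)) := by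
      clear_value y
      subst hsy
      field_simp
      ring
    rw [e2]
    positivity
  linarith

lemma case_two {a s : ℝ} (ha : 3 ≤ a) (hs0 : 0 < s) (hs1 : s < 1)
    (hz : hyp2F1 a (-1 / 2) 1 s = 0) : s < 1 / 2 := by
  refine zero_lt_of_partial (by linarith) (by norm_num) hs0 hs1 hz (by norm_num) 3 ?_
  norm_num [horner]
  nlinarith [mul_nonneg (sub_nonneg.2 ha) (sub_nonneg.2 ha),
    mul_nonneg (mul_nonneg (sub_nonneg.2 ha) (sub_nonneg.2 ha)) (sub_nonneg.2 ha)]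

/-- If `s ↦ (2s - 1) ₂F₁(1,b;c;s)` is below the positive bound `2(c - 1)` at `s₁`, then it is at every
smaller argument. -/
lemma mono_step {b c s₀ s₁ : ℝ} (hb : 0 < b) (hc : 1 < c) (h0 : 0 ≤ s₀) (h : s₀ ≤ s₁)
    (h1 : s₁ < 1) (hs : (2 * s₁ - 1) * hyp2F1 1 b c s₁ < 2 * (c - 1)) :
    (2 * s₀ - 1) * hyp2F1 1 b c s₀ < 2 * (c - 1) := by
  have hG := one_le_hyp hb (by linarith : 0 < c) h0 (h.trans_lt h1)
  rcases le_or_gt (2 * s₀ - 1) 0 with h2 | h2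
  · nlinarith
  · refine lt_of_le_of_lt ?_ hs
    have := hyp_mono hb (by linarith : 0 < c) h0 h h1
    gcongr
    linarith

/-! ### The case `k = n - 3` -/

lemma case_shift_one {c s : ℝ} (hc : 2 ≤ c) (hs0 : 0 < s) (hs1 : s < 1)
    (hz : hyp2F1 (c + 1) (-1 / 2) c s = 0) :
    (2 * s - 1) * hyp2F1 1 (c - 1 / 2) c s < 2 * (c - 1) := by
  have h1 : 2 * c / (2 * c + 1) < 1 := by rw [div_lt_one (by positivity)]; linarith
  refine mono_step (by linarith) (by linarith) hs0.le (zero_le_shift_one (by linarith) hs1 hz) h1 ?_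
  have hG := hyp_le_horner (b := c - 1 / 2) (c := c) (by linarith) (by linarith)
    (by positivity : 0 ≤ 2 * c / (2 * c + 1)) h1 4
  have e1 : 2 * (2 * c / (2 * c + 1)) - 1 = (2 * c - 1) / (2 * c + 1) := by field_simp; ring
  have e2 : 1 - 2 * c / (2 * c + 1) = 1 / (2 * c + 1) := by field_simp; ring
  rw [e1]
  refine lt_of_le_of_lt (mul_le_mul_of_nonneg_left hG ?_) ?_
  · exact div_nonneg (by linarith) (by linarith)
  rw [e2]
  obtain ⟨d, rfl⟩ : ∃ d, c = 2 + d := ⟨c - 2, by ring⟩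
  have hd : 0 ≤ d := by linarith
  norm_num [horner]
  rw [← sub_pos]
  field_simp
  ring_nf
  positivity

/-! ### The case `k = n - 2` -/

/-- A rational supersolution of `η² R' + R = η` on `[0, 8]`; the solution of this equation
vanishing at `0` is `e^(1/η) E₁(1/η)`. -/
noncomputable def Rsup (η : ℝ) : ℝ :=
  η * (1 + η / 3) / (1 + 11 / 10 * η + 9 / 100 * η ^ 2)

lemma Rsup_deriv {η : ℝ} (h0 : 0 ≤ η) (h8 : η ≤ 8) :
    ∃ R', HasDerivAt Rsup R' η ∧ 0 ≤ R' ∧ η ≤ η ^ 2 * R' + Rsup η := by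
  have hD : 0 < 1 + 11 / 10 * η + 9 / 100 * η ^ 2 := by positivity
  have hN : HasDerivAt (fun x : ℝ => x * (1 + x / 3)) (1 * (1 + η / 3) + η * (1 / 3)) η :=
    (hasDerivAt_id η).mul (((hasDerivAt_id η).div_const 3).const_add 1)
  have hDD : HasDerivAt (fun x : ℝ => 1 + 11 / 10 * x + 9 / 100 * x ^ 2)
      (11 / 10 * 1 + 9 / 100 * (2 * η)) η := by
    refine HasDerivAt.add (((hasDerivAt_id η).const_mul (11 / 10)).const_add 1) ?_
    have := (hasDerivAt_pow 2 η).const_mul (9 / 100 : ℝ)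
    norm_num at this ⊢
    exact this
  refine ⟨_, hN.div hDD hD.ne', ?_, ?_⟩
  · apply div_nonneg _ (sq_nonneg _)
    nlinarith [sq_nonneg η]
  · rw [Rsup, ← sub_nonneg]
    have : η ^ 2 * (((1 * (1 + η / 3) + η * (1 / 3)) * (1 + 11 / 10 * η + 9 / 100 * η ^ 2)
        - η * (1 + η / 3) * (11 / 10 * 1 + 9 / 100 * (2 * η)))
        / (1 + 11 / 10 * η + 9 / 100 * η ^ 2) ^ 2)
        + η * (1 + η / 3) / (1 + 11 / 10 * η + 9 / 100 * η ^ 2) - η =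
        η ^ 2 * (7 / 30 - 4 / 15 * η + 163 / 1500 * η ^ 2 - 81 / 10000 * η ^ 3)
          / (1 + 11 / 10 * η + 9 / 100 * η ^ 2) ^ 2 := by
      field_simp
      ring
    rw [this]
    have : 0 ≤ 7 / 30 - 4 / 15 * η + 163 / 1500 * η ^ 2 - 81 / 10000 * η ^ 3 := by
      nlinarith [mul_nonneg (sq_nonneg η) (sub_nonneg.2 h8), sq_nonneg (η - 3)]
    positivity

/-- With `W` the difference of the two sides, the differential equation of `₂F₁(1,b;b+1;·)` and the
inequality in `Rsup_deriv` give `b W + x W' ≥ 0`, so `x^b W` increases from `0`. -/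
lemma hyp_le_super {b s : ℝ} (hb : 0 < b) (hs0 : 0 ≤ s) (hs1 : s < 1) (h8 : s / (b * (1 - s)) ≤ 8) :
    hyp2F1 1 b (b + 1) s ≤ 1 + b * Rsup (s / (b * (1 - s))) := by
  rcases hs0.eq_or_lt with rfl | hs0'
  · rw [hyp2F1_eq, (summable_coef 1 b (by linarith) hs0 hs1).tsum_eq_zero_add]
    simp [coef_zero, Rsup]
  have hη (x : ℝ) (hx : x ∈ Set.Icc 0 s) : 0 ≤ x / (b * (1 - x)) ∧ x / (b * (1 - x)) ≤ 8 := by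
    have h1 : 0 < 1 - s := by linarith
    have h2 : 1 - s ≤ 1 - x := by linarith [hx.2]
    refine ⟨div_nonneg hx.1 (mul_nonneg hb.le (by linarith)), le_trans ?_ h8⟩
    have := hx.2
    gcongr
  have hder (x : ℝ) (hx : x ∈ Set.Icc 0 s) : ∃ W',
      HasDerivAt (fun x => 1 + b * Rsup (x / (b * (1 - x))) - hyp2F1 1 b (b + 1) x) W' x ∧
      0 ≤ b * (1 + b * Rsup (x / (b * (1 - x))) - hyp2F1 1 b (b + 1) x) + x * W' := by
    obtain ⟨R', hR, hR0, hRi⟩ := Rsup_deriv (hη x hx).1 (hη x hx).2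
    have hx1 : x < 1 := hx.2.trans_lt hs1
    have h1x : 0 < 1 - x := by linarith
    obtain ⟨D, hD, hode⟩ := hasDerivAt_hyp b (by linarith : 0 < b + 1) hx.1 hx1
    have hden : b * (1 - x) ≠ 0 := by positivity
    have he := (hasDerivAt_id x).div (((hasDerivAt_id x).const_sub 1).const_mul b) hden
    have hcomp := HasDerivAt.comp (h := fun x : ℝ => x / (b * (1 - x))) x hR he
    refine ⟨_, ((hcomp.const_mul b).const_add 1).sub hD, ?_⟩
    have hxD : x * D = b * (1 - (1 - x) * hyp2F1 1 b (b + 1) x) / (1 - x) := by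
      field_simp
      linarith
    simp only [id_eq]
    rw [mul_sub x, hxD]
    have hpos : 0 ≤ b * (b * ((x / (b * (1 - x))) ^ 2 * R' + Rsup (x / (b * (1 - x)))
        - x / (b * (1 - x))) + x / (b * (1 - x)) * R') := by
      have := (hη x hx).1
      have := sub_nonneg.2 hRi
      positivity
    refine hpos.trans_eq ?_
    field_simp
    ring
  have hmono : MonotoneOn (fun x => x ^ b *
      (1 + b * Rsup (x / (b * (1 - x))) - hyp2F1 1 b (b + 1) x)) (Set.Icc 0 s) := by
    have hdd (x : ℝ) (hx : x ∈ Set.Ioo 0 s) : ∃ d, 0 ≤ d ∧ HasDerivAt (fun x => x ^ b *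
        (1 + b * Rsup (x / (b * (1 - x))) - hyp2F1 1 b (b + 1) x)) d x := by
      obtain ⟨W', hW, h0⟩ := hder x ⟨hx.1.le, hx.2.le⟩
      refine ⟨_, ?_, (Real.hasDerivAt_rpow_const (p := b) (Or.inl hx.1.ne')).mul hW⟩
      have e : x ^ b = x ^ (b - 1) * x := by
        rw [← Real.rpow_add_one hx.1.ne', sub_add_cancel]
      rw [e]
      have := mul_nonneg (Real.rpow_nonneg hx.1.le (b - 1)) h0
      linarith
    apply monotoneOn_of_deriv_nonneg (convex_Icc _ _)
    · refine (Real.continuous_rpow_const hb.le).continuousOn.mul fun x hx => ?_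
      obtain ⟨W', hW, -⟩ := hder x hx
      exact hW.continuousAt.continuousWithinAt
    · rw [interior_Icc]
      intro x hx
      obtain ⟨d, -, hd⟩ := hdd x hx
      exact hd.differentiableAt.differentiableWithinAt
    · rw [interior_Icc]
      intro x hx
      obtain ⟨d, h0, hd⟩ := hdd x hx
      rwa [hd.deriv]
  have h := hmono ⟨le_rfl, hs0⟩ ⟨hs0, le_rfl⟩ hs0
  simp only [Real.zero_rpow hb.ne', zero_mul] at h
  have := nonneg_of_mul_nonneg_right h (Real.rpow_pos_of_pos hs0' b)
  linarith

lemma case_shift_half {c s : ℝ} (hc : 6 ≤ c) (hs0 : 0 < s) (hs1 : s < 1)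
    (hz : hyp2F1 (c + 1 / 2) (-1 / 2) c s = 0) :
    (2 * s - 1) * hyp2F1 1 (c - 1) c s < 2 * (c - 1) := by
  have h1 : 13 * c / (13 * c + 2) < 1 := by rw [div_lt_one (by positivity)]; linarith
  refine mono_step (by linarith) (by linarith) hs0.le (zero_le_shift_half hc hs1 hz) h1 ?_
  obtain ⟨d, rfl⟩ : ∃ d, c = d + 5 + 1 := ⟨c - 6, by ring⟩
  have hd : 0 ≤ d := by linarith
  have e0 : 13 * (d + 5 + 1) / (13 * (d + 5 + 1) + 2) /
      ((d + 5) * (1 - 13 * (d + 5 + 1) / (13 * (d + 5 + 1) + 2)))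
      = 13 * (d + 6) / (2 * (d + 5)) := by
    have : 1 - 13 * (d + 5 + 1) / (13 * (d + 5 + 1) + 2) = 2 / (13 * (d + 5 + 1) + 2) := by
      field_simp; ring
    rw [this]
    field_simp
    ring
  have hG := hyp_le_super (b := d + 5) (by linarith)
    (by positivity : 0 ≤ 13 * (d + 5 + 1) / (13 * (d + 5 + 1) + 2)) h1 (by
      rw [e0, div_le_iff₀ (by positivity)]; linarith)
  rw [e0] at hG
  have e1 : 2 * (13 * (d + 5 + 1) / (13 * (d + 5 + 1) + 2)) - 1
      = (13 * d + 76) / (13 * d + 80) := by field_simp; ring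
  rw [e1, show d + 5 + 1 - 1 = d + 5 by ring]
  refine lt_of_le_of_lt (mul_le_mul_of_nonneg_left hG (by positivity)) ?_
  rw [Rsup, ← sub_pos]
  field_simp
  ring_nf
  positivity

/-- The case `c = b + 1` from a rational point `s₁` to the right of the zero, with both hypotheses
about finite sums. -/
lemma case_explicit {a b c s s₁ : ℝ} (hbc : c = b + 1) (hb : 0 < b) (ha : 0 < a) (hs0 : 0 < s)
    (hs1 : s < 1) (hz : hyp2F1 a (-1 / 2) c s = 0) (M : ℕ) (h12 : 1 / 2 ≤ s₁) (hs₁ : s₁ < 1)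
    (hf : horner a (-1 / 2) c s₁ 0 0 (M + 1) ≤ 0)
    (hg : (2 * s₁ - 1) * horner 1 b c s₁ (1 / (1 - s₁)) 0 M < 2 * (c - 1)) :
    (2 * s - 1) * hyp2F1 1 b c s < 2 * (c - 1) := by
  have hs0' : 0 ≤ s₁ := by linarith
  refine mono_step hb (by linarith) hs0.le
    (zero_lt_of_partial ha (by linarith) hs0 hs1 hz hs0' M hf).le hs₁ (lt_of_le_of_lt ?_ hg)
  exact mul_le_mul_of_nonneg_left (hyp_le_horner hb (by linarith) hs0' hs₁ M) (by linarith)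

set_option maxHeartbeats 8000000 in
/-- Each rational number below lies slightly to the right of the zero for its `k`. -/
lemma case_small {k : ℕ} (hk5 : 5 ≤ k) (hk12 : k < 12) {s : ℝ} (hs0 : 0 < s) (hs1 : s < 1)
    (hz : hyp2F1 ((k : ℝ) / 2 + 1 / 2) (-1 / 2) (k / 2) s = 0) :
    (2 * s - 1) * hyp2F1 1 ((k : ℝ) / 2 - 1) (k / 2) s < 2 * ((k : ℝ) / 2 - 1) := by
  have key (s₁ : ℝ) := case_explicit (a := (k : ℝ) / 2 + 1 / 2) (b := (k : ℝ) / 2 - 1)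
    (c := (k : ℝ) / 2) (s₁ := s₁) (by ring)
    (by have : (5 : ℝ) ≤ k := by exact_mod_cast hk5
        linarith) (by positivity) hs0 hs1 hz 32
  interval_cases k
  · refine key (13 / 14) ?_ ?_ ?_ ?_ <;> norm_num [horner]
  · refine key (17 / 18) ?_ ?_ ?_ ?_ <;> norm_num [horner]
  · refine key (41 / 43) ?_ ?_ ?_ ?_ <;> norm_num [horner]
  · refine key (24 / 25) ?_ ?_ ?_ ?_ <;> norm_num [horner]
  · refine key (55 / 57) ?_ ?_ ?_ ?_ <;> norm_num [horner]
  · refine key (31 / 32) ?_ ?_ ?_ ?_ <;> norm_num [horner]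
  · refine key (35 / 36) ?_ ?_ ?_ ?_ <;> norm_num [horner]

/-! ### The four cases combined -/

/-- For `n ≥ 7` and `k ∈ {1, 2, n-3, n-2}`, the exponent `4-n` is
admissible: with `t₀` the unique zero of `f_{n,k}` in `(0,1)` and
`g̃(t) = ₂F₁(1,(n-4)/2;k/2;t²)`, one has
`g̃'(t₀)/g̃(t₀) > ((n-2)t₀ - (k-1)t₀⁻¹)/(1-t₀²)`. -/
theorem four_sub_n_admissible_edge_cases
    (n k : ℕ) (hn : 7 ≤ n) (hk : k ∈ ({1, 2, n - 3, n - 2} : Set ℕ))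
    (t₀ : ℝ) (ht₀ : t₀ ∈ Set.Ioo (0 : ℝ) 1) (hzero : fnk n k t₀ = 0)
    (huniq : ∀ t ∈ Set.Ioo (0 : ℝ) 1, fnk n k t = 0 → t = t₀) :
    deriv (gtil n k) t₀ / gtil n k t₀
      > (((n : ℝ) - 2) * t₀ - ((k : ℝ) - 1) * t₀⁻¹) / (1 - t₀ ^ 2) := by
  have hk1 : 1 ≤ k := by
    simp only [Set.mem_insert_iff, Set.mem_singleton_iff] at hk
    omega
  apply reduction hn hk1 ht₀
  have hs0 : 0 < t₀ ^ 2 := pow_pos ht₀.1 2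
  have hs1 : t₀ ^ 2 < 1 := by nlinarith [ht₀.1, ht₀.2]
  unfold fnk at hzero
  have hn' : (7 : ℝ) ≤ n := by exact_mod_cast hn
  generalize t₀ ^ 2 = s at *
  rcases hk with rfl | rfl | hk | hk
  · have := case_one (b := ((n : ℝ) - 4) / 2) (by linarith) hs0 hs1
      (by rw [← hzero]; congr 1; ring; norm_num)
    norm_num at this ⊢
    exact this
  · norm_num at hzero ⊢
    have hlt := case_two (a := ((n : ℝ) - 1) / 2) (by linarith) hs0 hs1 (by rw [← hzero]; norm_num)
    have := one_le_hyp (b := ((n : ℝ) - 4) / 2) (by linarith) one_pos hs0.le hs1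
    nlinarith
  · have hnk : (n : ℝ) = k + 3 := by
      have : n = k + 3 := by omega
      exact_mod_cast this
    have := case_shift_one (c := (k : ℝ) / 2) (by linarith) hs0 hs1
      (by rw [← hzero, hnk]; congr 1; ring)
    rw [hnk, show ((k : ℝ) + 3 - 4) / 2 = k / 2 - 1 / 2 by ring]
    linarith
  · have hnk' : n = k + 2 := by
      rw [Set.mem_singleton_iff] at hk
      omega
    have hnk : (n : ℝ) = k + 2 := by exact_mod_cast hnk'
    have hz : hyp2F1 ((k : ℝ) / 2 + 1 / 2) (-1 / 2) (k / 2) s = 0 := by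
      rw [← hzero, hnk]; congr 1; ring
    rw [hnk, show ((k : ℝ) + 2 - 4) / 2 = k / 2 - 1 by ring]
    rcases lt_or_ge k 12 with h12 | h12
    · linarith [case_small (by omega) h12 hs0 hs1 hz]
    · have : (12 : ℝ) ≤ k := by exact_mod_cast h12
      linarith [case_shift_half (by linarith) hs0 hs1 hz]
end

section
/- Let n ≥ 7 be an integer and let k be an integer with n/3 ≤ k ≤ 15n/16 and k ≤ n-2. Let t_{n,k} ∈ (0,1) be the unique zero of f_{n,k} and set g̃(t) := ₂F₁(1, (n-4)/2; k/2; t²). Then g̃'(t_{n,k})/g̃(t_{n,k}) > ((n-2)·t_{n,k} - (k-1)·t_{n,k}⁻¹)/(1 - t_{n,k}²); that is, 4-n ∈ A_{n,k}. -/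
open Filter Topology

/-! ### Power series with coefficient ratio tending to one -/

/-- Consecutive terms of `u` have a quotient tending to `1`; the power series with coefficients `u`
then converges on `(-1, 1)`, and so do all its derivatives. -/
def RatioOne (u : ℕ → ℝ) : Prop :=
  ∃ R : ℕ → ℝ, Tendsto R atTop (𝓝 1) ∧ ∀ m, u (m + 1) = R m * u m

/-- The coefficients of the derivative of `∑ u m * x ^ m`. -/
def dcoef (u : ℕ → ℝ) (m : ℕ) : ℝ := ((m : ℝ) + 1) * u (m + 1)

/-- The sum of the power series with coefficients `u`. -/
noncomputable def psum (u : ℕ → ℝ) (x : ℝ) : ℝ := ∑' m, u m * x ^ m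

lemma RatioOne.summable_norm {u : ℕ → ℝ} (hu : RatioOne u) {x : ℝ} (hx : |x| < 1) :
    Summable fun m => ‖u m * x ^ m‖ := by
  obtain ⟨R, hR, hrec⟩ := hu
  obtain ⟨r, hr0, hr1⟩ := exists_between hx
  have h1 : Tendsto (fun m => |R m| * |x|) atTop (𝓝 (|(1 : ℝ)| * |x|)) :=
    (hR.abs).mul_const _
  rw [abs_one, one_mul] at h1
  have h2 : ∀ᶠ m in atTop, |R m| * |x| < r := h1.eventually_lt_const hr0
  refine summable_of_ratio_norm_eventually_le (r := r) hr1 ?_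
  filter_upwards [h2] with m hm
  rw [norm_norm, norm_norm, hrec, pow_succ]
  have : ‖R m * u m * (x ^ m * x)‖ = (|R m| * |x|) * ‖u m * x ^ m‖ := by
    simp only [norm_mul, Real.norm_eq_abs]; ring
  rw [this]
  exact mul_le_mul_of_nonneg_right hm.le (norm_nonneg _)

lemma RatioOne.summable {u : ℕ → ℝ} (hu : RatioOne u) {x : ℝ} (hx : |x| < 1) :
    Summable fun m => u m * x ^ m := (hu.summable_norm hx).of_norm

lemma RatioOne.dcoef {u : ℕ → ℝ} (hu : RatioOne u) : RatioOne (dcoef u) := by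
  obtain ⟨R, hR, hrec⟩ := hu
  refine ⟨fun m => (1 + 1 / ((m : ℝ) + 1)) * R (m + 1), ?_, fun m => ?_⟩
  · have h1 := (tendsto_const_nhds (x := (1 : ℝ))).add (tendsto_one_div_add_atTop_nhds_zero_nat (𝕜 := ℝ))
    have h2 := h1.mul (hR.comp (tendsto_add_atTop_nat 1))
    simpa using h2
  · have hm : (m : ℝ) + 1 ≠ 0 := by positivity
    simp only [_root_.dcoef]
    rw [hrec (m + 1)]
    push_cast
    field_simp

lemma RatioOne.const_mul {u : ℕ → ℝ} (hu : RatioOne u) (t : ℝ) : RatioOne fun m => t * u m := by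
  obtain ⟨R, hR, hrec⟩ := hu
  exact ⟨R, hR, fun m => by simp only [hrec]; ring⟩

lemma psum_const_mul (u : ℕ → ℝ) (t x : ℝ) : psum (fun m => t * u m) x = t * psum u x := by
  simp only [psum, mul_assoc, tsum_mul_left]

lemma psum_zero (u : ℕ → ℝ) : psum u 0 = u 0 := by
  rw [psum, tsum_eq_single 0 (fun m hm => by simp [hm])]; simp

lemma RatioOne.hasDerivAt {u : ℕ → ℝ} (hu : RatioOne u) {x : ℝ} (hx : |x| < 1) :
    HasDerivAt (psum u) (psum (_root_.dcoef u) x) x := by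
  obtain ⟨r, hr0, hr1⟩ := exists_between hx
  have hrpos : 0 < r := (abs_nonneg x).trans_lt hr0
  have habs : |r| < 1 := by rwa [abs_of_pos hrpos]
  have hs : Summable fun m : ℕ => ‖u m * ((m : ℝ) * r ^ (m - 1))‖ := by
    rw [← summable_nat_add_iff 1]
    refine (hu.dcoef.summable_norm habs).congr fun m => ?_
    simp only [_root_.dcoef, Nat.add_sub_cancel]
    push_cast
    congr 1; ring
  have key := hasDerivAt_tsum_of_isPreconnected (g := fun (m : ℕ) y => u m * y ^ m)
    (g' := fun (m : ℕ) y => u m * ((m : ℝ) * y ^ (m - 1))) (t := Metric.ball (0 : ℝ) r) hs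
    Metric.isOpen_ball (convex_ball (0 : ℝ) r).isPreconnected
    (fun m y _ => (hasDerivAt_pow m y).const_mul (u m))
    (fun m y hy => by
      have hy' : |y| ≤ r := by simpa using (Metric.mem_ball.mp hy).le
      simp only [norm_mul, norm_pow, Real.norm_eq_abs, abs_of_pos hrpos]
      gcongr)
    (y₀ := 0) (Metric.mem_ball_self hrpos) (hu.summable (by simp)) (y := x)
    (by simpa using hr0)
  have h2 : psum (_root_.dcoef u) x = ∑' m : ℕ, u m * ((m : ℝ) * x ^ (m - 1)) := by
    have hs' : Summable fun m : ℕ => u m * ((m : ℝ) * x ^ (m - 1)) := by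
      rw [← summable_nat_add_iff 1]
      refine (hu.dcoef.summable hx).congr fun m => ?_
      simp only [_root_.dcoef, Nat.add_sub_cancel]
      push_cast; ring
    rw [hs'.tsum_eq_zero_add]
    simp only [psum, _root_.dcoef, Nat.add_sub_cancel]
    push_cast
    simp only [zero_mul, mul_zero, zero_add]
    exact tsum_congr fun m => by ring
  rw [h2]
  exact key

lemma psum_succ {u : ℕ → ℝ} (hu : RatioOne u) {x : ℝ} (hx : |x| < 1) :
    psum u x = u 0 + x * psum (fun m => u (m + 1)) x := by
  rw [psum, (hu.summable hx).tsum_eq_zero_add, psum, ← tsum_mul_left]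
  simp only [pow_zero, mul_one]
  congr 1
  exact tsum_congr fun m => by ring

/-! ### Differential equations of the hypergeometric series -/

/-- The coefficients of `₂F₁(a,b;c;·)`. -/
noncomputable def hcoef (a b c : ℝ) (m : ℕ) : ℝ :=
  ((ascPochhammer ℝ m).eval a * (ascPochhammer ℝ m).eval b)
    / ((ascPochhammer ℝ m).eval c * (m.factorial : ℝ))

lemma hyp2F1_eq_psum (a b c : ℝ) : hyp2F1 a b c = psum (hcoef a b c) := rfl

lemma hcoef_zero (a b c : ℝ) : hcoef a b c 0 = 1 := by simp [hcoef]

lemma hcoef_succ (a b : ℝ) {c : ℝ} (hc : 0 < c) (m : ℕ) :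
    hcoef a b c (m + 1) = (a + m) * (b + m) / ((c + m) * (m + 1)) * hcoef a b c m := by
  have h1 : (ascPochhammer ℝ m).eval c ≠ 0 := (ascPochhammer_pos m c hc).ne'
  have h2 : (m.factorial : ℝ) ≠ 0 := by positivity
  have h3 : c + m ≠ 0 := by positivity
  have h4 : (m : ℝ) + 1 ≠ 0 := by positivity
  simp only [hcoef, ascPochhammer_succ_eval, Nat.factorial_succ]
  push_cast
  field_simp

lemma ratioOne_hcoef (a b : ℝ) {c : ℝ} (hc : 0 < c) : RatioOne (hcoef a b c) := by
  refine ⟨_, ?_, hcoef_succ a b hc⟩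
  have aux : ∀ p q : ℝ, Tendsto (fun m : ℕ => (p + m) / (q + m)) atTop (𝓝 1) := fun p q => by
    simpa using tendsto_add_mul_div_add_mul_atTop_nhds p q (1 : ℝ) (d := 1) one_ne_zero
  have h := (aux a c).mul (aux b 1)
  rw [mul_one] at h
  refine h.congr fun m => ?_
  rw [div_mul_div_comm, add_comm (1 : ℝ)]

section ODE

variable {a b c : ℝ}

/-- The first-order equation of `G = ₂F₁(1,b;c;·)`:
`s(1-s)G' = (c-1) - ((c-1) - bs)G`. -/
lemma ode_G (hc : 0 < c) {s : ℝ} (hs : |s| < 1) :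
    s * (1 - s) * psum (dcoef (hcoef 1 b c)) s
      = (c - 1) - ((c - 1) - b * s) * psum (hcoef 1 b c) s := by
  set u := hcoef 1 b c with hu
  have hR : RatioOne u := ratioOne_hcoef 1 b hc
  have hS := hR.summable hs
  have hS1 := hR.dcoef.summable hs
  have e1 : psum u s = 1 + s * psum (fun m => u (m + 1)) s := by
    rw [psum_succ hR hs, hu, hcoef_zero]
  have hS2 : Summable fun m => u (m + 1) * s ^ m := by
    obtain ⟨R, h1, h2⟩ := hR
    exact RatioOne.summable ⟨fun m => R (m + 1), h1.comp (tendsto_add_atTop_nat 1),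
      fun m => h2 (m + 1)⟩ hs
  -- the recurrence `(c + m) u (m+1) = (b + m) u m`, summed against `s ^ m`
  have e2 : (c - 1) * psum (fun m => u (m + 1)) s + psum (dcoef u) s
      = b * psum u s + s * psum (dcoef u) s := by
    have e3 : s * psum (dcoef u) s = ∑' m : ℕ, (m : ℝ) * u m * s ^ m := by
      have hs' : Summable fun m : ℕ => (m : ℝ) * u m * s ^ m := by
        rw [← summable_nat_add_iff 1]
        refine (hS1.mul_left s).congr fun m => ?_
        simp only [dcoef]
        push_cast; ring
      rw [hs'.tsum_eq_zero_add, psum, ← tsum_mul_left]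
      simp only [dcoef, Nat.cast_zero, zero_mul, zero_add]
      exact tsum_congr fun m => by push_cast; ring
    have hs' : Summable fun m : ℕ => (m : ℝ) * u m * s ^ m := by
      rw [← summable_nat_add_iff 1]
      refine (hS1.mul_left s).congr fun m => ?_
      simp only [dcoef]
      push_cast; ring
    rw [e3]
    simp only [psum]
    rw [← tsum_mul_left, ← tsum_mul_left, ← (hS2.mul_left (c - 1)).tsum_add hS1,
      ← (hS.mul_left b).tsum_add hs']
    refine tsum_congr fun m => ?_
    have h3 : c + m ≠ 0 := by positivity
    have h4 : (m : ℝ) + 1 ≠ 0 := by positivity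
    simp only [dcoef, hu, hcoef_succ 1 b hc m]
    field_simp
    ring
  linear_combination s * e2 + (c - 1) * e1

/-- The coefficients of `H = -(2c/a) f'`, where `f = ₂F₁(a,-1/2;c;·)`; so `H = ₂F₁(a+1,1/2;c+1;·)`. -/
noncomputable def Hcoef (a c : ℝ) (m : ℕ) : ℝ := -(2 * c / a) * dcoef (hcoef a (-1 / 2) c) m

lemma ratioOne_Hcoef (hc : 0 < c) : RatioOne (Hcoef a c) :=
  (ratioOne_hcoef a (-1 / 2) hc).dcoef.const_mul _

/-- The recurrence for the coefficients of `f`, multiplied out. -/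
lemma Hcoef_eq (ha : 0 < a) (hc : 0 < c) (m : ℕ) :
    (c + m) * Hcoef a c m = -(2 * c / a) * ((a + m) * (-1 / 2 + m)) * hcoef a (-1 / 2) c m := by
  have h3 : c + m ≠ 0 := by positivity
  have h4 : (m : ℝ) + 1 ≠ 0 := by positivity
  simp only [Hcoef, dcoef, hcoef_succ a (-1 / 2) hc m]
  field_simp

lemma deriv_f (ha : 0 < a) (hc : 0 < c) (s : ℝ) :
    psum (dcoef (hcoef a (-1 / 2) c)) s = -(a / (2 * c)) * psum (Hcoef a c) s := by
  rw [show Hcoef a c = fun m => -(2 * c / a) * dcoef (hcoef a (-1 / 2) c) m from rfl,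
    psum_const_mul]
  field_simp

/-- The hypergeometric equation of `f = ₂F₁(a,-1/2;c;·)`, written as a first-order equation for
`H = -(2c/a) f'`. -/
lemma ode_H (ha : 0 < a) (hc : 0 < c) {s : ℝ} (hs : |s| < 1) :
    s * (1 - s) * psum (dcoef (Hcoef a c)) s
      = c * psum (hcoef a (-1 / 2) c) s - (c - (a + 1 / 2) * s) * psum (Hcoef a c) s := by
  set u := hcoef a (-1 / 2) c with hu
  set h := Hcoef a c with hh
  have hRu : RatioOne u := ratioOne_hcoef a (-1 / 2) hc
  have hR : RatioOne h := ratioOne_Hcoef hc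
  have hSu := hRu.summable hs
  have hS := hR.summable hs
  have hS1 := hR.dcoef.summable hs
  have hs' : Summable fun m : ℕ => (m : ℝ) * h m * s ^ m := by
    rw [← summable_nat_add_iff 1]
    refine (hS1.mul_left s).congr fun m => ?_
    simp only [dcoef]
    push_cast; ring
  have e3 : s * psum (dcoef h) s = ∑' m : ℕ, (m : ℝ) * h m * s ^ m := by
    rw [hs'.tsum_eq_zero_add, psum, ← tsum_mul_left]
    simp only [dcoef, Nat.cast_zero, zero_mul, zero_add]
    exact tsum_congr fun m => by push_cast; ring
  have e4 : c * psum h s + s * psum (dcoef h) s = ∑' m : ℕ, (c + m) * h m * s ^ m := by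
    rw [e3, psum, ← tsum_mul_left, ← (hS.mul_left c).tsum_add hs']
    exact tsum_congr fun m => by ring
  have e5 : (a + 1 / 2) * psum h s + s * psum (dcoef h) s
      = ∑' m : ℕ, (a + 1 / 2 + m) * h m * s ^ m := by
    rw [e3, psum, ← tsum_mul_left, ← (hS.mul_left (a + 1 / 2)).tsum_add hs']
    exact tsum_congr fun m => by ring
  have hS4 : Summable fun m : ℕ => (c + m) * h m * s ^ m :=
    ((hS.mul_left c).add hs').congr fun m => by ring
  have hS5 : Summable fun m : ℕ => (a + 1 / 2 + m) * h m * s ^ m :=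
    ((hS.mul_left (a + 1 / 2)).add hs').congr fun m => by ring
  have h0 : h 0 = 1 := by
    have h1 := Hcoef_eq ha hc 0
    rw [hcoef_zero, ← hh] at h1
    simp only [Nat.cast_zero, add_zero] at h1
    field_simp at h1
    linarith
  have e6 : ∑' m : ℕ, (c + m) * h m * s ^ m
      = c * psum u s + s * ∑' m : ℕ, (a + 1 / 2 + m) * h m * s ^ m := by
    rw [hS4.tsum_eq_zero_add, psum, ← tsum_mul_left, (hSu.mul_left c).tsum_eq_zero_add,
      ← tsum_mul_left, add_assoc,
      ← ((summable_nat_add_iff 1).2 (hSu.mul_left c)).tsum_add (hS5.mul_left s)]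
    congr 1
    · simp [h0, hu, hcoef_zero]
    · refine tsum_congr fun m => ?_
      have h1 := Hcoef_eq ha hc (m + 1)
      have h3 : c + m ≠ 0 := by positivity
      have h4 : (m : ℝ) + 1 ≠ 0 := by positivity
      have hm : h m = -(2 * c / a) * (((m : ℝ) + 1) * u (m + 1)) := rfl
      rw [← hh, ← hu] at h1
      rw [h1, hm]
      push_cast
      field_simp
      ring
  rw [← e4, ← e5] at e6
  linear_combination e6

lemma hcoef_pos (ha : 0 < a) (hb : 0 < b) (hc : 0 < c) (m : ℕ) : 0 < hcoef a b c m := by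
  have := ascPochhammer_pos m a ha
  have := ascPochhammer_pos m b hb
  have := ascPochhammer_pos m c hc
  unfold hcoef
  positivity

lemma hcoef_neg (ha : 0 < a) (hc : 0 < c) (m : ℕ) : hcoef a (-1 / 2) c (m + 1) < 0 := by
  induction m with
  | zero =>
    rw [hcoef_succ _ _ hc, hcoef_zero]
    have : 0 < a / c := by positivity
    simp only [Nat.cast_zero, add_zero, zero_add, mul_one]
    rw [show a * (-1 / 2) / c = -(a / c) / 2 by ring]
    linarith
  | succ m ih =>
    rw [hcoef_succ _ _ hc]
    refine mul_neg_of_pos_of_neg ?_ ih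
    push_cast
    have : 0 < -1 / 2 + ((m : ℝ) + 1) := by
      have : (0 : ℝ) ≤ m := Nat.cast_nonneg m
      linarith
    positivity

lemma Hcoef_pos (ha : 0 < a) (hc : 0 < c) (m : ℕ) : 0 < Hcoef a c m := by
  have h1 := hcoef_neg ha hc m
  have h2 : 0 < (2 * c / a) * ((m : ℝ) + 1) := by positivity
  have h3 : Hcoef a c m = (2 * c / a) * ((m : ℝ) + 1) * (-hcoef a (-1 / 2) c (m + 1)) := by
    simp only [Hcoef, dcoef]; ring
  rw [h3]
  exact mul_pos h2 (by linarith)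

lemma Hcoef_zero (ha : 0 < a) (hc : 0 < c) : Hcoef a c 0 = 1 := by
  have h1 := Hcoef_eq ha hc 0
  rw [hcoef_zero] at h1
  simp only [Nat.cast_zero, add_zero] at h1
  field_simp at h1
  linarith

end ODE

/-- A power series with nonnegative coefficients is bounded below by its constant term. -/
lemma le_psum {u : ℕ → ℝ} (hu : RatioOne u) (h : ∀ m, 0 ≤ u m) {x : ℝ} (h0 : 0 ≤ x)
    (h1 : x < 1) : u 0 ≤ psum u x := by
  have := (hu.summable (by rwa [abs_of_nonneg h0])).sum_le_tsum {0}
    (fun m _ => mul_nonneg (h m) (pow_nonneg h0 m))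
  simpa [psum] using this

/-! ### The comparison principle -/

/-- A comparison principle: a function that starts nonnegative, and whose derivative is at least
`K * Y` wherever `Y < 0`, stays nonnegative. -/
lemma nonneg_of_barrier {Y Y' : ℝ → ℝ} {S K : ℝ} (hY : ContinuousOn Y (Set.Icc 0 S))
    (h0 : 0 ≤ Y 0) (hd : ∀ x ∈ Set.Ioo 0 S, HasDerivAt Y (Y' x) x)
    (hneg : ∀ x ∈ Set.Ioo 0 S, Y x < 0 → K * Y x ≤ Y' x) :
    ∀ x ∈ Set.Icc 0 S, 0 ≤ Y x := by
  intro x₁ hx₁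
  by_contra! hlt
  -- `p` is the last point before `x₁` where `Y` is nonnegative
  have hsub : Set.Icc 0 x₁ ⊆ Set.Icc 0 S := Set.Icc_subset_Icc_right hx₁.2
  have hclosed : IsClosed (Set.Icc 0 x₁ ∩ Y ⁻¹' Set.Ici 0) :=
    (hY.mono hsub).preimage_isClosed_of_isClosed isClosed_Icc isClosed_Ici
  have hcomp : IsCompact (Set.Icc 0 x₁ ∩ Y ⁻¹' Set.Ici 0) :=
    isCompact_Icc.of_isClosed_subset hclosed Set.inter_subset_left
  obtain ⟨p, ⟨hpI, hpY⟩, hpmax⟩ := hcomp.exists_isGreatest ⟨0, ⟨le_rfl, hx₁.1⟩, h0⟩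
  have hpY' : 0 ≤ Y p := hpY
  have hpx : p < x₁ := lt_of_le_of_ne hpI.2 (fun h => by rw [h] at hpY'; linarith)
  have hnegY : ∀ y ∈ Set.Ioo p x₁, Y y < 0 := fun y hy => by
    by_contra! hge
    have : y ≤ p := hpmax ⟨⟨hpI.1.trans hy.1.le, hy.2.le⟩, hge⟩
    exact absurd hy.1 (not_lt.2 this)
  have hmono : MonotoneOn (fun x => Y x * Real.exp (-(K * x))) (Set.Icc p x₁) := by
    have hder : ∀ y ∈ Set.Ioo p x₁, HasDerivAt (fun x => Y x * Real.exp (-(K * x)))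
        (Y' y * Real.exp (-(K * y)) + Y y * (Real.exp (-(K * y)) * -(K * 1))) y := fun y hy =>
      (hd y ⟨hpI.1.trans_lt hy.1, hy.2.trans_le hx₁.2⟩).mul
        (((hasDerivAt_id y).const_mul K).neg.exp)
    refine monotoneOn_of_deriv_nonneg (convex_Icc p x₁) ?_ ?_ ?_
    · refine (hY.mono fun y hy => ⟨hpI.1.trans hy.1, hy.2.trans hx₁.2⟩).mul ?_
      fun_prop
    · rw [interior_Icc]
      exact fun y hy => (hder y hy).differentiableAt.differentiableWithinAt
    · rw [interior_Icc]
      intro y hy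
      rw [(hder y hy).deriv]
      have h1 := hneg y ⟨hpI.1.trans_lt hy.1, hy.2.trans_le hx₁.2⟩ (hnegY y hy)
      have h2 := Real.exp_pos (-(K * y))
      have h3 : 0 ≤ (Y' y - K * Y y) * Real.exp (-(K * y)) :=
        mul_nonneg (by linarith) h2.le
      linarith
  have h1 := hmono ⟨le_rfl, hpx.le⟩ ⟨hpx.le, le_rfl⟩ hpx.le
  have h2 : 0 ≤ Y p * Real.exp (-(K * p)) := mul_nonneg hpY' (Real.exp_pos _).le
  have h3 : Y x₁ * Real.exp (-(K * x₁)) < 0 := mul_neg_of_neg_of_pos hlt (Real.exp_pos _)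
  simp only at h1
  linarith

/-! ### Barriers for the zero of `f` -/

/-- `f = ₂F₁(a,-1/2;c;·)`; with `a = (n-1)/2` and `c = k/2` this is `f_{n,k}` in the variable
`s = t²`. -/
noncomputable def fS (a c : ℝ) : ℝ → ℝ := psum (hcoef a (-1 / 2) c)

/-- `H = -(2c/a) f'`, normalised so that `H 0 = 1`. -/
noncomputable def HS (a c : ℝ) : ℝ → ℝ := psum (Hcoef a c)

/-- `G = ₂F₁(1,a-3/2;c;·)`; with `a = (n-1)/2` and `c = k/2` this is `g̃_{n,k}` in the variable
`s = t²`. -/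
noncomputable def GS (a c : ℝ) : ℝ → ℝ := psum (hcoef 1 (a - 3 / 2) c)

section Barriers

variable {a c : ℝ}

lemma abs_lt_one_of_mem {x : ℝ} (h0 : 0 ≤ x) (h1 : x < 1) : |x| < 1 := by
  rwa [abs_of_nonneg h0]

lemma fS_hasDerivAt (ha : 0 < a) (hc : 0 < c) {x : ℝ} (h0 : 0 ≤ x) (h1 : x < 1) :
    HasDerivAt (fS a c) (-(a / (2 * c)) * HS a c x) x := by
  have h := (ratioOne_hcoef a (-1 / 2) hc).hasDerivAt (abs_lt_one_of_mem h0 h1)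
  rwa [deriv_f ha hc] at h

lemma HS_hasDerivAt (hc : 0 < c) {x : ℝ} (h0 : 0 ≤ x) (h1 : x < 1) :
    HasDerivAt (HS a c) (psum (dcoef (Hcoef a c)) x) x :=
  (ratioOne_Hcoef hc).hasDerivAt (abs_lt_one_of_mem h0 h1)

lemma GS_hasDerivAt (hc : 0 < c) {x : ℝ} (h0 : 0 ≤ x) (h1 : x < 1) :
    HasDerivAt (GS a c) (psum (dcoef (hcoef 1 (a - 3 / 2) c)) x) x :=
  (ratioOne_hcoef 1 (a - 3 / 2) hc).hasDerivAt (abs_lt_one_of_mem h0 h1)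

lemma one_le_HS (ha : 0 < a) (hc : 0 < c) {x : ℝ} (h0 : 0 ≤ x) (h1 : x < 1) : 1 ≤ HS a c x := by
  have h := le_psum (ratioOne_Hcoef hc) (fun m => (Hcoef_pos ha hc m).le) h0 h1
  rwa [Hcoef_zero ha hc] at h

lemma one_le_GS (ha : 3 / 2 < a) (hc : 0 < c) {x : ℝ} (h0 : 0 ≤ x) (h1 : x < 1) :
    1 ≤ GS a c x := by
  have h := le_psum (ratioOne_hcoef 1 (a - 3 / 2) hc)
    (fun m => (hcoef_pos one_pos (by linarith) hc m).le) h0 h1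
  rwa [hcoef_zero] at h

lemma fS_zero : fS a c 0 = 1 := by rw [fS, psum_zero, hcoef_zero]

lemma HS_zero (ha : 0 < a) (hc : 0 < c) : HS a c 0 = 1 := by rw [HS, psum_zero, Hcoef_zero ha hc]

lemma GS_zero : GS a c 0 = 1 := by rw [GS, psum_zero, hcoef_zero]

lemma fS_lt (ha : 0 < a) (hc : 0 < c) {x y : ℝ} (h0 : 0 ≤ x) (hxy : x < y) (h1 : y < 1) :
    fS a c y < fS a c x := by
  have hd : ∀ z ∈ Set.Icc x y, HasDerivAt (fS a c) (-(a / (2 * c)) * HS a c z) z :=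
    fun z hz => fS_hasDerivAt ha hc (h0.trans hz.1) (hz.2.trans_lt h1)
  refine strictAntiOn_of_deriv_neg (convex_Icc x y)
    (fun z hz => (hd z hz).continuousAt.continuousWithinAt) ?_ ⟨le_rfl, hxy.le⟩
    ⟨hxy.le, le_rfl⟩ hxy
  rw [interior_Icc]
  intro z hz
  rw [(hd z ⟨hz.1.le, hz.2.le⟩).deriv]
  have hH := one_le_HS ha hc (h0.trans hz.1.le) (hz.2.trans h1)
  have : 0 < a / (2 * c) := by positivity
  nlinarith

lemma fS_le_one (ha : 0 < a) (hc : 0 < c) {x : ℝ} (h0 : 0 ≤ x) (h1 : x < 1) : fS a c x ≤ 1 := by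
  rcases h0.eq_or_lt with rfl | h
  · rw [fS_zero]
  · exact ((fS_lt ha hc le_rfl h h1).trans_eq fS_zero).le

/-- The zero of `f` is at most `2c/(a+c)`: the ratio `cf/H` satisfies a Riccati equation, and the
rational function `B` below, which vanishes at `2c/(a+c)`, is a supersolution of it. -/
lemma zero_le_of_one_le (ha : 0 < a) (hc : 0 < c) (he : 1 ≤ a - c) {s : ℝ}
    (hs1 : s < 1) (hz : fS a c s = 0) : s ≤ 2 * c / (a + c) := by
  by_contra! hlt
  set s₁ := 2 * c / (a + c) with hs₁
  have hs₁0 : 0 < s₁ := by positivity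
  obtain ⟨h, hh⟩ : ∃ h, h = (a - c) / 2 := ⟨_, rfl⟩
  have hh0 : 1 / 2 ≤ h := by linarith
  have hae : a = c + 2 * h := by linarith
  have hs₁h : c * (1 - s₁) - h * s₁ = 0 := by
    have : (a + c) * s₁ = 2 * c := by rw [hs₁]; field_simp
    rw [hae] at this; linarith
  have hfpos : 0 < fS a c s₁ := hz ▸ fS_lt ha hc hs₁0.le hlt hs1
  have hs₁1 : s₁ < 1 := hlt.trans hs1
  set D : ℝ → ℝ := fun x => (c + 1) * (1 - x) + h * x with hD
  set N : ℝ → ℝ := fun x => (c + 1) * (1 - x) * (c * (1 - x) - h * x) with hN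
  have hDpos : ∀ x ∈ Set.Icc 0 s₁, 0 < D x := fun x hx => by
    have h1 : 0 < 1 - x := by linarith [hx.2]
    have h2 := hx.1
    simp only [hD]; positivity
  have hNd : ∀ x, HasDerivAt N
      (-(c + 1) * (c * (1 - x) - h * x) + (c + 1) * (1 - x) * (-c - h)) x := by
    intro x
    have h1 : HasDerivAt (fun x : ℝ => 1 - x) (-1) x := by
      simpa using (hasDerivAt_id x).const_sub 1
    have h2 := (h1.const_mul (c + 1)).mul ((h1.const_mul c).sub ((hasDerivAt_id x).const_mul h))
    refine h2.congr_deriv ?_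
    simp only [id, Pi.sub_apply]; ring
  have hDd : ∀ x, HasDerivAt D (-(c + 1) + h) x := by
    intro x
    have h1 : HasDerivAt (fun x : ℝ => 1 - x) (-1) x := by
      simpa using (hasDerivAt_id x).const_sub 1
    have h2 := (h1.const_mul (c + 1)).add ((hasDerivAt_id x).const_mul h)
    refine h2.congr_deriv ?_
    ring
  have hder : ∀ x ∈ Set.Icc 0 s₁, HasDerivAt (fun x => N x / D x * HS a c x - c * fS a c x) _ x :=
    fun x hx => (((hNd x).div (hDd x) (hDpos x hx).ne').mul
      (HS_hasDerivAt hc hx.1 (hx.2.trans_lt hs₁1))).sub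
      ((fS_hasDerivAt ha hc hx.1 (hx.2.trans_lt hs₁1)).const_mul c)
  have key := nonneg_of_barrier (K := 0)
    (fun x hx => (hder x hx).continuousAt.continuousWithinAt) ?_
    (fun x hx => hder x ⟨hx.1.le, hx.2.le⟩) ?_ s₁ ⟨hs₁0.le, le_rfl⟩
  · have hN0 : N s₁ = 0 := by simp only [hN, hs₁h, mul_zero]
    rw [hN0, zero_div, zero_mul] at key
    have := mul_pos hc hfpos
    linarith
  · simp only [hN, hD, HS_zero ha hc, fS_zero]
    have : c + 1 ≠ 0 := by positivity
    field_simp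
    linarith
  · intro x hx hY
    have hx1 : x < 1 := hx.2.trans hs₁1
    have hx0 : 0 < x := hx.1
    have hw : 0 < 1 - x := by linarith
    have hDx := hDpos x ⟨hx.1.le, hx.2.le⟩
    have hH := one_le_HS ha hc hx.1.le hx1
    have hode := ode_H ha hc (abs_lt_one_of_mem hx.1.le hx1)
    have hv : 0 ≤ c * (1 - x) - h * x := by
      have : (c + h) * x ≤ (c + h) * s₁ := by
        have : 0 ≤ c + h := by linarith
        gcongr
        exact hx.2.le
      linarith
    have hB : 0 ≤ N x / D x := by
      refine div_nonneg ?_ hDx.le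
      simp only [hN]; positivity
    rw [zero_mul, Pi.div_apply]
    set f := fS a c x with hf
    set H := HS a c x with hHdef
    set H' := psum (dcoef (Hcoef a c)) x
    change x * (1 - x) * H' = c * f - (c - (a + 1 / 2) * x) * H at hode
    have hbr : 0 ≤ x ^ 2 * (2 * c + 1) * (h - 1 / 2) * (1 - x) * h
        * ((c + 1) * (1 - x) - h * x) / D x ^ 2 := by
      have : 0 ≤ (c + 1) * (1 - x) - h * x := by linarith
      have : 0 ≤ h - 1 / 2 := by linarith
      positivity
    refine nonneg_of_mul_nonneg_right (?_ : 0 ≤ x * (1 - x) * _) (mul_pos hx0 hw)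
    have hid : x * (1 - x) * (((-(c + 1) * (c * (1 - x) - h * x) + (c + 1) * (1 - x) * (-c - h)) * D x
          - N x * (-(c + 1) + h)) / D x ^ 2 * H + N x / D x * H' - c * (-(a / (2 * c)) * H))
        = -(N x / D x) * (N x / D x * H - c * f) + H * (x ^ 2 * (2 * c + 1) * (h - 1 / 2) * (1 - x) * h
        * ((c + 1) * (1 - x) - h * x) / D x ^ 2) := by
      have h1 : x * (1 - x) * (N x / D x * H') = N x / D x * (c * f - (c - (a + 1 / 2) * x) * H) := by
        rw [← hode]; ring
      have h2 : c * (-(a / (2 * c)) * H) = -(a / 2) * H := by field_simp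
      rw [h2]
      have h3 : x * (1 - x) * ((-(c + 1) * (c * (1 - x) - h * x) + (c + 1) * (1 - x) * (-c - h)) * D x
          - N x * (-(c + 1) + h)) / D x ^ 2 + (N x / D x) ^ 2 - N x / D x * (c - (a + 1 / 2) * x)
          + x * (1 - x) * (a / 2) = x ^ 2 * (2 * c + 1) * (h - 1 / 2) * (1 - x) * h
        * ((c + 1) * (1 - x) - h * x) / D x ^ 2 := by
        have hDx' := hDx.ne'
        field_simp
        simp only [hN, hD, hae]
        ring
      linear_combination h1 + H * h3
    rw [hid]
    have hY' : 0 ≤ -(N x / D x * H - c * f) := by linarith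
    nlinarith [mul_nonneg hB hY', mul_nonneg (zero_le_one.trans hH) hbr]

/-- A linear lower bound for the ratio `cf/H`, again from its Riccati equation. -/
lemma lower_barrier (ha : 0 < a) (hc : 0 < c) {S : ℝ} (hS : S < 1)
    (hB : 0 ≤ c - (a + 1 / 2) * S) {s : ℝ} (hs0 : 0 ≤ s) (hs : s ≤ S) :
    (c - (a + 1 / 2) * s) * HS a c s ≤ c * fS a c s := by
  have hder : ∀ x ∈ Set.Icc 0 S,
      HasDerivAt (fun x => c * fS a c x - (c - (a + 1 / 2) * x) * HS a c x) _ x := fun x hx =>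
    ((fS_hasDerivAt ha hc hx.1 (hx.2.trans_lt hS)).const_mul c).sub
      ((((hasDerivAt_id x).const_mul (a + 1 / 2)).const_sub c).mul
        (HS_hasDerivAt hc hx.1 (hx.2.trans_lt hS)))
  have key := nonneg_of_barrier (K := 0)
    (fun x hx => (hder x hx).continuousAt.continuousWithinAt) ?_
    (fun x hx => hder x ⟨hx.1.le, hx.2.le⟩) ?_ s ⟨hs0, hs⟩
  · linarith
  · simp [fS_zero, HS_zero ha hc]
  · intro x hx hY
    have hx1 : x < 1 := hx.2.trans hS
    have hx0 : 0 < x := hx.1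
    have hw : 0 < 1 - x := by linarith
    have hH := one_le_HS ha hc hx.1.le hx1
    have hode := ode_H ha hc (abs_lt_one_of_mem hx.1.le hx1)
    have hBx : 0 ≤ c - (a + 1 / 2) * x := by
      have : (a + 1 / 2) * x ≤ (a + 1 / 2) * S := by
        gcongr
        exact hx.2.le
      linarith
    rw [zero_mul]
    simp only [id]
    set f := fS a c x with hf
    set H := HS a c x with hHdef
    set H' := psum (dcoef (Hcoef a c)) x
    change x * (1 - x) * H' = c * f - (c - (a + 1 / 2) * x) * H at hode
    refine nonneg_of_mul_nonneg_right (?_ : 0 ≤ x * (1 - x) * _) (mul_pos hx0 hw)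
    have h2 : c * (-(a / (2 * c)) * H) = -(a / 2) * H := by field_simp
    rw [h2]
    have h3 : 0 ≤ (c - (a + 1 / 2) * x) * -(c * f - (c - (a + 1 / 2) * x) * H) :=
      mul_nonneg hBx (by linarith)
    have h4 : 0 ≤ x * (1 - x) * (a / 2 + 1 / 2) * H := by positivity
    linear_combination h3 + h4 + (c - (a + 1 / 2) * x) * hode

end Barriers

/-! ### The bound on `G` for `c ≥ 2` and `a - c ≥ 5/2` -/

/-- The part of the barrier error term not involving `r = cf/H` is already positive between `1/3`
and the upper bound `2c/(a+c)` for the zero of `f`. -/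
lemma error_pos {a c l x : ℝ} (hc : 2 ≤ c) (he : 5 / 2 ≤ a - c) (hk : a - c + 1 / 2 ≤ 2 * c)
    (hl : c * l = c - 1 / 2) (hx : 1 / 3 ≤ x) (hxs : x * (a + c) ≤ 2 * c) :
    0 < l * (a / 2) * x * (1 - x) + (c - 1 - (a - 3 / 2) * x) * (x - 1 / 2) - 1 / 4 := by
  obtain ⟨u, hu⟩ : ∃ u, u = (a - c) / (2 * c) := ⟨_, rfl⟩
  have hc0 : 0 < c := by linarith
  have hcu : 2 * c * u = a - c := by rw [hu]; field_simp
  have ha : a = c + 2 * c * u := by linarith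
  have hu0 : 0 < u := by rw [hu]; apply div_pos <;> linarith
  have hu1 : u < 1 := by rw [hu, div_lt_one (by linarith)]; linarith
  -- the error is a concave quadratic in `(1 - x) / x`, positive at the end points `u` and `2`
  have hp : 0 ≤ (1 - x) - u * x := by
    rw [ha] at hxs
    have : c * 0 ≤ c * ((1 - x) - u * x) := by linarith
    exact le_of_mul_le_mul_left this hc0
  have hq : 0 ≤ 2 * x - (1 - x) := by linarith
  have hV1 : 0 < u * (3 * c * u - 3 - u / 2) := by
    apply mul_pos hu0; linarith
  have hV2 : 0 < 6 * c * u - 4 - 2 * u := by linarith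
  have hx0 : 0 < x := by linarith
  have h1 : 0 ≤ (2 - u) * (c - 1 / 2) * ((1 - x) - u * x) * (2 * x - (1 - x)) := by
    have : 0 ≤ 2 - u := by linarith
    have : 0 ≤ c - 1 / 2 := by linarith
    positivity
  have h2 : 0 < u * (3 * c * u - 3 - u / 2) * (2 * x - (1 - x))
      + (6 * c * u - 4 - 2 * u) * ((1 - x) - u * x) := by
    rcases hq.eq_or_lt with h | h
    · have : 0 < (1 - x) - u * x := by nlinarith
      rw [← h, mul_zero, zero_add]; exact mul_pos hV2 this
    · have := mul_pos hV1 h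
      have := mul_nonneg hV2.le hp
      linarith
  have h3 := mul_pos hx0 h2
  have h4 : 0 < 2 * (2 - u) := by linarith
  refine pos_of_mul_pos_right (?_ : 0 < 2 * (2 - u) * _) h4.le
  have hla : l * a = (c - 1 / 2) * (1 + 2 * u) := by rw [ha]; linear_combination (1 + 2 * u) * hl
  have : 2 * (2 - u) * (l * (a / 2) * x * (1 - x) + (c - 1 - (a - 3 / 2) * x) * (x - 1 / 2) - 1 / 4)
      = (2 - u) * (c - 1 / 2) * ((1 - x) - u * x) * (2 * x - (1 - x))
        + x * (u * (3 * c * u - 3 - u / 2) * (2 * x - (1 - x))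
      + (6 * c * u - 4 - 2 * u) * ((1 - x) - u * x)) := by
    rw [ha] at hla ⊢
    linear_combination (2 - u) * x * (1 - x) * hla
  rw [this]
  linarith

/-- For `x ≤ 1/3` the barrier error term is nonnegative because of the linear lower bound for
`r = cf/H`. -/
lemma error_nonneg {a c l x r : ℝ} (hc : 2 ≤ c) (he : 5 / 2 ≤ a - c) (hk : a - c + 1 / 2 ≤ 2 * c)
    (hl : c * l = c - 1 / 2) (hx : 0 ≤ x) (hx3 : x ≤ 1 / 3) (hr : c - (a + 1 / 2) * x ≤ r) :
    0 ≤ l * (1 - l) * r ^ 2 + l * (a / 2) * x * (1 - x)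
      + (c - 1 - (a - 3 / 2) * x) * (x - 1 / 2) - 1 / 4 := by
  have hc0 : 0 < c := by linarith
  obtain ⟨E, hE⟩ : ∃ E, E = a - c + 1 / 2 := ⟨_, rfl⟩
  have ha : a = c + E - 1 / 2 := by linarith
  have hr0 : 0 ≤ c - (a + 1 / 2) * x := by
    have : (a + 1 / 2) * x ≤ (a + 1 / 2) * (1 / 3) := by gcongr; linarith
    linarith
  have hl' : l = 1 - 1 / (2 * c) := by field_simp; linarith
  have hl1 : 0 ≤ l * (1 - l) := by
    have h1 : 1 / (2 * c) ≤ 1 := by rw [div_le_one (by linarith)]; linarith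
    have h2 : 0 ≤ 1 / (2 * c) := by positivity
    rw [hl']
    apply mul_nonneg <;> linarith
  have hr2 : (c - (a + 1 / 2) * x) ^ 2 ≤ r ^ 2 := pow_le_pow_left₀ hr0 hr 2
  have h1 := mul_le_mul_of_nonneg_left hr2 hl1
  suffices h : 0 ≤ l * (1 - l) * (c - (a + 1 / 2) * x) ^ 2 + l * (a / 2) * x * (1 - x)
      + (c - 1 - (a - 3 / 2) * x) * (x - 1 / 2) - 1 / 4 by linarith
  have h2 : 0 ≤ x * ((1 - x) - 2 * x) * (2 * c ^ 2 - 4 * c + (E + 1 / 2) / 2) := by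
    have : 0 ≤ (1 - x) - 2 * x := by linarith
    have : 0 ≤ 2 * c ^ 2 - 4 * c + (E + 1 / 2) / 2 := by nlinarith
    positivity
  have hl34 : 3 / 4 ≤ l := by
    rw [hl', le_sub_iff_add_le, ← le_sub_iff_add_le', div_le_iff₀ (by linarith)]
    linarith
  have h3 : 0 ≤ x ^ 2 * (4 * c ^ 2 - 8 * c + (E + 1 / 2) + l * E ^ 2 - c * (E - 1 / 2)) := by
    have : 3 / 4 * E ^ 2 ≤ l * E ^ 2 := by gcongr
    have : 0 ≤ 4 * c ^ 2 - 8 * c + (E + 1 / 2) + l * E ^ 2 - c * (E - 1 / 2) := by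
      nlinarith [sq_nonneg (E / 2 - (c - 2)), sq_nonneg (E - 1)]
    positivity
  refine nonneg_of_mul_nonneg_right (?_ : 0 ≤ 2 * c * _) (by linarith)
  have : 2 * c * (l * (1 - l) * (c - (a + 1 / 2) * x) ^ 2 + l * (a / 2) * x * (1 - x)
      + (c - 1 - (a - 3 / 2) * x) * (x - 1 / 2) - 1 / 4)
      = x * ((1 - x) - 2 * x) * (2 * c ^ 2 - 4 * c + (E + 1 / 2) / 2)
        + x ^ 2 * (4 * c ^ 2 - 8 * c + (E + 1 / 2) + l * E ^ 2 - c * (E - 1 / 2)) := by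
    rw [hl', ha]
    field_simp
    ring
  rw [this]
  linarith

/-- The bound on `G` at the zero of `f`, away from the boundary of the parameter region. The
function `Y = (c-1)H - λcfG - (s-1/2)HG` with `λ = 1 - 1/(2c)` vanishes at `0`, and
`s(1-s)Y' = PY + HGQ` with `Q` nonnegative up to the zero of `f`. -/
lemma GS_lt_of_le {a c : ℝ} (hc : 2 ≤ c) (he : 5 / 2 ≤ a - c) (hk : a - c + 1 / 2 ≤ 2 * c)
    {s : ℝ} (hs0 : 1 / 2 ≤ s) (hs1 : s < 1) (hz : fS a c s = 0) :
    (s - 1 / 2) * GS a c s < c - 1 := by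
  have hc0 : 0 < c := by linarith
  have ha : 0 < a := by linarith
  have hsle : s * (a + c) ≤ 2 * c := by
    have := zero_le_of_one_le ha hc0 (by linarith) hs1 hz
    rwa [le_div_iff₀ (by linarith)] at this
  obtain ⟨l, hl'⟩ : ∃ l, l = 1 - 1 / (2 * c) := ⟨_, rfl⟩
  have hl : c * l = c - 1 / 2 := by rw [hl']; field_simp
  obtain ⟨r, hr⟩ : ∃ r : ℝ → ℝ, ∀ x, r x = c * fS a c x / HS a c x := ⟨_, fun _ => rfl⟩
  set Q : ℝ → ℝ := fun x => l * (1 - l) * r x ^ 2 + l * (a / 2) * x * (1 - x)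
      + (c - 1 - (a - 3 / 2) * x) * (x - 1 / 2) - 1 / 4 with hQ
  set P : ℝ → ℝ := fun x => (1 - l) * r x - (c - (a + 1 / 2) * x) - (x - 1 / 2) with hP
  have hrH : ∀ x ∈ Set.Icc 0 s, c * fS a c x = r x * HS a c x := fun x hx => by
    have := one_le_HS ha hc0 hx.1 (hx.2.trans_lt hs1)
    rw [hr, div_mul_cancel₀]
    linarith
  have hl1 : 0 ≤ l * (1 - l) := by
    have h1 : 1 / (2 * c) ≤ 1 := by rw [div_le_one (by linarith)]; linarith
    have h2 : 0 ≤ 1 / (2 * c) := by positivity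
    rw [hl']
    apply mul_nonneg <;> linarith
  have hQpos : ∀ x ∈ Set.Icc (1 / 3) s, 0 < Q x := fun x hx => by
    have hxs : x * (a + c) ≤ 2 * c := by
      refine le_trans ?_ hsle
      have := hx.2
      gcongr
    have h1 := error_pos hc he hk hl hx.1 hxs
    have h2 := mul_nonneg hl1 (sq_nonneg (r x))
    simp only [hQ]
    linarith
  have hQnonneg : ∀ x ∈ Set.Icc 0 s, 0 ≤ Q x := fun x hx => by
    rcases le_total (1 / 3) x with h | h
    · exact (hQpos x ⟨h, hx.2⟩).le
    · have h1 := lower_barrier ha hc0 (S := 1 / 3) (by norm_num) (by linarith) hx.1 h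
      have h2 := one_le_HS ha hc0 hx.1 (hx.2.trans_lt hs1)
      rw [hrH x hx] at h1
      exact error_nonneg hc he hk hl hx.1 h (le_of_mul_le_mul_right h1 (by linarith))
  have hder : ∀ x ∈ Set.Icc 0 s, ∃ Y', HasDerivAt (fun x => (c - 1) * HS a c x
      - l * (c * fS a c x) * GS a c x - (x - 1 / 2) * (HS a c x * GS a c x)) Y' x ∧
      x * (1 - x) * Y' = P x * ((c - 1) * HS a c x
      - l * (c * fS a c x) * GS a c x - (x - 1 / 2) * (HS a c x * GS a c x))
      + HS a c x * GS a c x * Q x := fun x hx => by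
    have hx1 := hx.2.trans_lt hs1
    have dH := HS_hasDerivAt (a := a) hc0 hx.1 hx1
    have dG := GS_hasDerivAt (a := a) hc0 hx.1 hx1
    have df := fS_hasDerivAt ha hc0 hx.1 hx1
    refine ⟨_, ((dH.const_mul (c - 1)).sub (((df.const_mul c).const_mul l).mul dG)).sub
      (((hasDerivAt_id x).sub_const (1 / 2)).mul (dH.mul dG)), ?_⟩
    have oH := ode_H ha hc0 (abs_lt_one_of_mem hx.1 hx1)
    have oG := ode_G (b := a - 3 / 2) hc0 (abs_lt_one_of_mem hx.1 hx1)
    simp only [id]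
    have hrx := hrH x hx
    change x * (1 - x) * _ = c * fS a c x - (c - (a + 1 / 2) * x) * HS a c x at oH
    change x * (1 - x) * _ = (c - 1) - ((c - 1) - (a - 3 / 2) * x) * GS a c x at oG
    have h2 : c * (-(a / (2 * c)) * HS a c x) = -(a / 2) * HS a c x := by field_simp
    rw [h2]
    rw [hrx] at oH ⊢
    simp only [hP, hQ]
    linear_combination ((c - 1) - (x - 1 / 2) * GS a c x) * oH
      - (l * r x * HS a c x + (x - 1 / 2) * HS a c x) * oG
  choose! Y' hY' hYeq using hder
  have hnonneg := nonneg_of_barrier (K := (a - 1 / 2) / (1 - s))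
    (fun x hx => (hY' x hx).continuousAt.continuousWithinAt) ?_
    (fun x hx => hY' x ⟨hx.1.le, hx.2.le⟩) ?_
  · by_contra! hge
    have hsI : s ∈ Set.Icc 0 s := ⟨by linarith, le_rfl⟩
    have hH := one_le_HS ha hc0 hsI.1 hs1
    have hG := one_le_GS (by linarith) hc0 hsI.1 hs1 (a := a)
    have hYs := hYeq s hsI
    have h0 := hnonneg s hsI
    simp only [hz, mul_zero, zero_mul, sub_zero] at h0 hYs
    have hYs0 : (c - 1) * HS a c s - (s - 1 / 2) * (HS a c s * GS a c s) = 0 := by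
      have := mul_le_mul_of_nonneg_right hge (show 0 ≤ HS a c s by linarith)
      linarith
    rw [hYs0, mul_zero, zero_add] at hYs
    have hpos : 0 < Y' s := by
      have h1 : 0 < HS a c s * GS a c s * Q s :=
        mul_pos (mul_pos (by linarith) (by linarith)) (hQpos s ⟨by linarith, le_rfl⟩)
      rw [← hYs] at h1
      exact pos_of_mul_pos_right h1 (mul_nonneg hsI.1 (by linarith))
    -- a nonnegative function vanishing at `s` cannot have positive derivative there
    have hslope := (hasDerivAt_iff_tendsto_slope.1 (hY' s hsI)).mono_left
      (nhdsWithin_mono s (fun y (hy : y ∈ Set.Iio s) => ne_of_lt hy))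
    have hle : Y' s ≤ 0 := by
      refine le_of_tendsto hslope ?_
      have hev : ∀ᶠ y in 𝓝[<] s, y ∈ Set.Ioo 0 s :=
        Ioo_mem_nhdsLT (by linarith)
      filter_upwards [hev] with y hy
      rw [slope_def_field]
      refine div_nonpos_of_nonneg_of_nonpos ?_ (by linarith [hy.2])
      have := hnonneg y ⟨hy.1.le, hy.2.le⟩
      simp only [hz, mul_zero, zero_mul, sub_zero]
      rw [hYs0]
      linarith
    linarith
  · rw [HS_zero ha hc0, fS_zero, GS_zero]
    linarith
  · intro x hx hneg
    have hxI : x ∈ Set.Icc 0 s := ⟨hx.1.le, hx.2.le⟩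
    have hx1 := hx.2.trans hs1
    have hH := one_le_HS ha hc0 hxI.1 hx1
    have hG := one_le_GS (by linarith) hc0 hxI.1 hx1 (a := a)
    have hf := fS_le_one ha hc0 hxI.1 hx1
    have heq := hYeq x hxI
    set Y := (c - 1) * HS a c x
      - l * (c * fS a c x) * GS a c x - (x - 1 / 2) * (HS a c x * GS a c x)
    have hrc : r x ≤ c := by
      rw [hr, div_le_iff₀ (by linarith)]
      gcongr
      linarith
    have hP1 : P x ≤ (a - 1 / 2) * x := by
      have h1 : (1 - l) * r x ≤ (1 - l) * c := by
        have : 0 ≤ 1 - l := by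
          have : 0 ≤ 1 / (2 * c) := by positivity
          rw [hl']
          linarith
        gcongr
      simp only [hP]
      linarith
    have h1 : 0 ≤ HS a c x * GS a c x * Q x :=
      mul_nonneg (mul_nonneg (by linarith) (by linarith)) (hQnonneg x hxI)
    have h2 : (a - 1 / 2) * x * Y ≤ P x * Y := mul_le_mul_of_nonpos_right hP1 hneg.le
    have h3 : x * ((a - 1 / 2) * Y) ≤ x * ((1 - x) * Y' x) := by linarith
    have h4 := le_of_mul_le_mul_left h3 hx.1
    have h5 : (a - 1 / 2) / (1 - x) * Y ≤ Y' x := by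
      rw [div_mul_eq_mul_div, div_le_iff₀ (by linarith)]
      linarith
    refine le_trans (mul_le_mul_of_nonpos_right ?_ hneg.le) h5
    apply div_le_div_of_nonneg_left <;> linarith [hx.2]

/-! ### Fixed-point verification of the remaining cases -/

/-- The common denominator of the fixed-point computations below. -/
def scale : ℕ := 10 ^ 15

/-- Verifies `(2s-1) * ₂F₁(1,(n-4)/2;k/2;s) < k-2` at `s = p/q`, in fixed-point arithmetic with
denominator `scale`. `X` is an upper bound for the term of index `m` and `acc` one for the sum of the
previous terms; `fuel` further terms are added up and the remaining ones are dominated by a geometric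
series of ratio `(m+1)/m * p/q`. -/
def gCheck (n k p q : ℕ) : ℕ → ℕ → ℕ → ℕ → Bool
  | 0, m, X, acc => decide ((m + 1) * p < m * q ∧
      (2 * p - q) * (acc * (m * q - (m + 1) * p) + X * (m * q))
        < (k - 2) * q * scale * (m * q - (m + 1) * p))
  | fuel + 1, m, X, acc =>
      gCheck n k p q fuel (m + 1) (X * ((n - 4 + 2 * m) * p) / ((k + 2 * m) * q) + 1) (acc + X)

/-- Verifies `₂F₁((n-1)/2,-1/2;k/2;s) < 0` at `s = p/q`. All terms but the first are negative; `X` is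
a lower bound for the absolute value of the term of index `m`, and `acc` one for the sum of the
absolute values of the terms of index `1, …, m-1`. -/
def fCheck (n k p q : ℕ) : ℕ → ℕ → ℕ → ℕ → Bool
  | 0, _, _, acc => decide (scale < acc)
  | fuel + 1, m, X, acc =>
      fCheck n k p q fuel (m + 1)
        (X * ((n - 1 + 2 * m) * (2 * m - 1) * p) / ((k + 2 * m) * (2 * (m + 1) * q))) (acc + X)

/-- The case `n = k + 2`: here `a - c = 1/2`, the bound `2c/(a+c)` is not available, and the zero of `f`
is compared with `k / (k + 0.385)` instead. The constant lies just below the values `k(1-s₀)/s₀`. -/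
lemma gChecks_two : ∀ i < 26, gCheck (i + 7) (i + 5) (200 * (i + 5)) (200 * (i + 5) + 77)
    (10 * (i + 7)) 0 scale 0 = true := by
  decide +kernel

lemma fChecks_two : ∀ i < 26, fCheck (i + 7) (i + 5) (200 * (i + 5)) (200 * (i + 5) + 77)
    (10 * (i + 7)) 1 ((i + 6) * (200 * (i + 5)) * scale / (2 * (i + 5) * (200 * (i + 5) + 77))) 0
      = true := by
  decide +kernel

lemma gChecks_three : ∀ i < 42, gCheck (i + 7) (i + 4) (2 * (i + 4)) (2 * i + 10)
    (4 * (i + 7)) 0 scale 0 = true := by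
  decide +kernel

lemma gChecks_four : ∀ i < 57, gCheck (i + 8) (i + 4) (2 * (i + 4)) (2 * i + 11)
    (4 * (i + 8)) 0 scale 0 = true := by
  decide +kernel

lemma gChecks_five : ∀ i < 73, gCheck (i + 8) (i + 3) (2 * (i + 3)) (2 * i + 10)
    (4 * (i + 8)) 0 scale 0 = true := by
  decide +kernel

lemma gCheck_nine : gCheck 9 3 6 11 36 0 scale 0 = true := by decide +kernel

lemma gCheck_seven : gCheck 7 3 131 200 28 0 scale 0 = true := by decide +kernel

lemma fCheck_seven : fCheck 7 3 131 200 28 1 (6 * 131 * scale / (2 * 3 * 200)) 0 = true := by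
  decide +kernel

/-- Domination of the tail from index `m` by a geometric series of ratio `(m+1)/m * p/q`. -/
lemma tail_le {n k p q m : ℕ} (hk : 0 < k) (hnk : n - 4 ≤ k + 2) (hq : 0 < q)
    {T : ℕ → ℝ} (hT : ∀ i, 0 ≤ T i) (hsum : Summable T)
    (hrec : ∀ i, T (i + 1) = ((n - 4 + 2 * i : ℕ) * p : ℝ) / ((k + 2 * i) * q) * T i)
    (hm : (m + 1) * p < m * q) :
    (m * q - (m + 1) * p : ℝ) * ∑' j, T (m + j) ≤ T m * (m * q) := by
  have hm0 : 0 < m := by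
    rcases Nat.eq_zero_or_pos m with rfl | h
    · simp at hm
    · exact h
  have hmR : (0 : ℝ) < m := by exact_mod_cast hm0
  have hqR : (0 : ℝ) < q := by exact_mod_cast hq
  have hkR : (0 : ℝ) < k := by exact_mod_cast hk
  have hlt : ((m : ℝ) + 1) * p < m * q := by exact_mod_cast hm
  set θ : ℝ := ((m : ℝ) + 1) * p / (m * q) with hθ
  have hθ0 : 0 ≤ θ := by positivity
  have hθ1 : θ < 1 := by rw [hθ, div_lt_one (by positivity)]; exact hlt
  have hratio : ∀ j, T (m + j) ≤ T m * θ ^ j := by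
    intro j
    induction j with
    | zero => simp
    | succ j ih =>
      rw [← add_assoc, hrec, pow_succ]
      have h1 : ((n - 4 + 2 * (m + j) : ℕ) * p : ℝ) / ((k + 2 * (m + j : ℕ)) * q) ≤ θ := by
        rw [hθ, div_le_div_iff₀ (by positivity) (by positivity)]
        have h2 : ((n - 4 + 2 * (m + j) : ℕ) : ℝ) ≤ k + 2 * (m + j) + 2 := by
          have : n - 4 + 2 * (m + j) ≤ k + 2 * (m + j) + 2 := by omega
          exact_mod_cast this
        have h3 : ((n - 4 + 2 * (m + j) : ℕ) : ℝ) * m ≤ (m + 1) * (k + 2 * (m + j)) := by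
          have h4 := mul_le_mul_of_nonneg_right h2 hmR.le
          have h5 : (0 : ℝ) ≤ j := Nat.cast_nonneg j
          nlinarith
        have h6 : (0 : ℝ) ≤ p * q := by positivity
        have h7 := mul_le_mul_of_nonneg_right h3 h6
        rw [Nat.cast_add m j]
        linarith
      calc _ ≤ θ * T (m + j) := mul_le_mul_of_nonneg_right h1 (hT _)
        _ ≤ θ * (T m * θ ^ j) := mul_le_mul_of_nonneg_left ih hθ0
        _ = _ := by ring
  have hS : Summable fun j => T (m + j) := by
    simpa only [add_comm m] using (summable_nat_add_iff m).2 hsum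
  have h1 := hS.tsum_le_tsum hratio ((summable_geometric_of_lt_one hθ0 hθ1).mul_left (T m))
  rw [tsum_mul_left, tsum_geometric_of_lt_one hθ0 hθ1] at h1
  have h2 : (m * q - (m + 1) * p : ℝ) = (1 - θ) * (m * q) := by
    rw [hθ]; field_simp
  have h3 : (1 - θ) * ∑' j, T (m + j) ≤ T m := by
    have h4 : 0 < 1 - θ := by linarith
    calc _ ≤ (1 - θ) * (T m * (1 - θ)⁻¹) := mul_le_mul_of_nonneg_left h1 h4.le
      _ = T m := by field_simp
  rw [h2]
  have := mul_le_mul_of_nonneg_right h3 (show 0 ≤ (m * q : ℝ) by positivity)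
  linarith

/-- Soundness of `gCheck` for a sequence `T` of terms obeying the recurrence of
`₂F₁(1,(n-4)/2;k/2;p/q)`, by induction on the number of terms still to be added. -/
lemma gCheck_sound {n k p q : ℕ} (hk : 0 < k) (hnk : n - 4 ≤ k + 2) (hq : 0 < q)
    {T : ℕ → ℝ} (hT : ∀ i, 0 ≤ T i) (hsum : Summable T)
    (hrec : ∀ i, T (i + 1) = ((n - 4 + 2 * i : ℕ) * p : ℝ) / ((k + 2 * i) * q) * T i) :
    ∀ fuel m X acc : ℕ, gCheck n k p q fuel m X acc = true → scale * T m ≤ X →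
      scale * ∑' i, T i ≤ acc + scale * ∑' j, T (m + j) →
      ((2 * p - q : ℕ) : ℝ) * ∑' i, T i < (k - 2 : ℕ) * q := by
  have hqR : (0 : ℝ) < q := by exact_mod_cast hq
  have hkR : (0 : ℝ) < k := by exact_mod_cast hk
  have hscale : (0 : ℝ) < scale := by unfold scale; positivity
  intro fuel
  induction fuel with
  | zero =>
    intro m X acc hc hX hG
    rw [gCheck, decide_eq_true_eq] at hc
    obtain ⟨hm, hc⟩ := hc
    have htail := tail_le hk hnk hq hT hsum hrec hm
    have hlt : 0 < (m * q - (m + 1) * p : ℝ) := by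
      rw [sub_pos]; exact_mod_cast hm
    have hcR : ((2 * p - q : ℕ) : ℝ) * (acc * (m * q - (m + 1) * p) + X * (m * q))
        < (k - 2 : ℕ) * q * scale * (m * q - (m + 1) * p) := by
      have h : ((m * q - (m + 1) * p : ℕ) : ℝ) = m * q - (m + 1) * p := by
        rw [Nat.cast_sub hm.le]; push_cast; ring
      rw [← h]
      exact_mod_cast hc
    have h1 : scale * (m * q - (m + 1) * p : ℝ) * ∑' i, T i
        ≤ acc * (m * q - (m + 1) * p) + X * (m * q) := by
      have h2 := mul_le_mul_of_nonneg_right hG hlt.le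
      have h3 := mul_le_mul_of_nonneg_left htail hscale.le
      have h4 := mul_le_mul_of_nonneg_right hX (show 0 ≤ (m * q : ℝ) by positivity)
      linarith
    have h5 := mul_le_mul_of_nonneg_left h1 (Nat.cast_nonneg (α := ℝ) (2 * p - q))
    have h6 : 0 < scale * (m * q - (m + 1) * p : ℝ) := by positivity
    refine lt_of_mul_lt_mul_left ?_ h6.le
    linarith
  | succ fuel ih =>
    intro m X acc hc hX hG
    rw [gCheck] at hc
    refine ih _ _ _ hc ?_ ?_
    · rw [hrec]
      have hd : (0 : ℝ) < (k + 2 * m) * q := by positivity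
      have h1 : ((X * ((n - 4 + 2 * m) * p) : ℕ) : ℝ) / ((k + 2 * m) * q : ℕ)
          ≤ (X * ((n - 4 + 2 * m) * p) / ((k + 2 * m) * q) + 1 : ℕ) := by
        rw [div_le_iff₀ (by push_cast; exact hd)]
        have := (Nat.lt_div_mul_add (a := X * ((n - 4 + 2 * m) * p)) (b := (k + 2 * m) * q)
          (by positivity)).le.trans_eq (Nat.succ_mul _ _).symm
        exact_mod_cast this
      refine le_trans ?_ h1
      have h2 := mul_le_mul_of_nonneg_right hX
        (show 0 ≤ ((n - 4 + 2 * m : ℕ) * p : ℝ) / ((k + 2 * m) * q) by positivity)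
      calc _ = scale * T m * (((n - 4 + 2 * m : ℕ) * p : ℝ) / ((k + 2 * m) * q)) := by ring
        _ ≤ _ := h2
        _ = _ := by rw [mul_div_assoc']; push_cast; rfl
    · have hS : Summable fun j => T (m + j) := by
        simpa only [add_comm m] using (summable_nat_add_iff m).2 hsum
      have h1 : ∑' j, T (m + j) = T m + ∑' j, T (m + 1 + j) := by
        rw [hS.tsum_eq_zero_add, add_zero]
        simp only [add_assoc, add_comm 1]
      rw [h1] at hG
      push_cast
      linarith

/-- Soundness of `fCheck`, where `V` is the sequence of the negated terms of
`₂F₁((n-1)/2,-1/2;k/2;p/q)`; the term of index `0` is left out of the recurrence. -/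
lemma fCheck_sound {n k p q : ℕ} (hn : 0 < n) (hk : 0 < k) (hq : 0 < q)
    {V : ℕ → ℝ} (hV : ∀ i, V (i + 2)
      = ((n + 1 + 2 * i : ℝ) * (2 * i + 1) * p) / ((k + 2 * (i + 1)) * (2 * (i + 2) * q)) * V (i + 1)) :
    ∀ fuel m X acc : ℕ, fCheck n k p q fuel (m + 1) X acc = true → X ≤ scale * V (m + 1) →
      acc ≤ scale * ∑ j ∈ Finset.range m, V (j + 1) →
      ∃ N, (1 : ℝ) < ∑ j ∈ Finset.range N, V (j + 1) := by
  have hscale : (0 : ℝ) < scale := by unfold scale; positivity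
  intro fuel
  induction fuel with
  | zero =>
    intro m X acc hc _ hG
    rw [fCheck, decide_eq_true_eq] at hc
    have h1 : (scale : ℝ) < acc := by exact_mod_cast hc
    refine ⟨m, ?_⟩
    have h2 : (scale : ℝ) * 1 < scale * ∑ j ∈ Finset.range m, V (j + 1) := by linarith
    exact lt_of_mul_lt_mul_left h2 hscale.le
  | succ fuel ih =>
    intro m X acc hc hX hG
    rw [fCheck] at hc
    refine ih (m + 1) _ _ hc ?_ ?_
    · rw [hV]
      have e1 : n - 1 + 2 * (m + 1) = n + 1 + 2 * m := by omega
      have e2 : 2 * (m + 1) - 1 = 2 * m + 1 := by omega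
      rw [e1, e2]
      refine Nat.cast_div_le.trans ?_
      have h2 := mul_le_mul_of_nonneg_right hX
        (show 0 ≤ ((n + 1 + 2 * m : ℝ) * (2 * m + 1) * p)
          / ((k + 2 * (m + 1)) * (2 * (m + 2) * q)) by positivity)
      calc _ = (X : ℝ) * (((n + 1 + 2 * m : ℝ) * (2 * m + 1) * p)
          / ((k + 2 * (m + 1)) * (2 * (m + 2) * q))) := by
            rw [mul_div_assoc']; push_cast; ring
        _ ≤ _ := h2
        _ = _ := by ring
    · rw [Finset.sum_range_succ]
      push_cast
      linarith

/-- A successful run of `fCheck` places the zero of `f` to the left of `p/q`. -/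
lemma zero_lt_of_fCheck {n k p q fuel : ℕ} (hn : 2 ≤ n) (hk : 0 < k) (hp : p < q)
    (hc : fCheck n k p q fuel 1 ((n - 1) * p * scale / (2 * k * q)) 0 = true) {s : ℝ} (hs : s < 1)
    (hz : fS (((n : ℝ) - 1) / 2) ((k : ℝ) / 2) s = 0) : s < (p : ℝ) / q := by
  have hkR : (0 : ℝ) < k := by exact_mod_cast hk
  have hqR : (0 : ℝ) < q := by exact_mod_cast (Nat.zero_le p).trans_lt hp
  have hnR : (2 : ℝ) ≤ n := by exact_mod_cast hn
  obtain ⟨x, hx⟩ : ∃ x, x = (p : ℝ) / q := ⟨_, rfl⟩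
  have hx0 : 0 ≤ x := by rw [hx]; positivity
  have hx1 : x < 1 := by rw [hx, div_lt_one hqR]; exact_mod_cast hp
  have hxq : x * q = p := by rw [hx]; field_simp
  set a : ℝ := ((n : ℝ) - 1) / 2 with ha
  set c : ℝ := (k : ℝ) / 2 with hcdef
  have ha0 : 0 < a := by linarith
  have hc0 : 0 < c := by positivity
  have hR := ratioOne_hcoef a (-1 / 2) hc0
  have hsum := hR.summable (abs_lt_one_of_mem hx0 hx1)
  obtain ⟨N, hN⟩ := fCheck_sound (n := n) (k := k) (p := p) (q := q) (by omega) hk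
    (by omega) (V := fun m => -(hcoef a (-1 / 2) c m * x ^ m)) (fun i => by
      have h1 : c + (i + 1 : ℕ) ≠ 0 := by positivity
      rw [hcoef_succ a (-1 / 2) hc0 (i + 1), ← hxq, pow_succ x (i + 1)]
      rw [ha, hcdef]
      push_cast
      field_simp
      ring) fuel 0 _ 0 hc (by
      refine Nat.cast_div_le.trans_eq ?_
      rw [zero_add, hcoef_succ a (-1 / 2) hc0 0, hcoef_zero]
      push_cast [Nat.cast_sub (show 1 ≤ n by omega)]
      rw [← hxq, ha, hcdef]
      field_simp
      ring) (by simp)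
  have hneg : fS a c x < 0 := by
    rw [fS, psum, hsum.tsum_eq_zero_add, hcoef_zero]
    have h1 := ((summable_nat_add_iff 1).2 hsum).neg.sum_le_tsum (Finset.range N) (fun m _ => by
      have := hcoef_neg ha0 hc0 m
      have := pow_nonneg hx0 (m + 1)
      nlinarith)
    rw [tsum_neg] at h1
    simp only [pow_zero, mul_one]
    linarith
  rw [← hx]
  by_contra! hge
  rcases hge.eq_or_lt with h | h
  · rw [h, hz] at hneg; exact lt_irrefl _ hneg
  · have := fS_lt ha0 hc0 hx0 h hs
    linarith

/-- A successful run of `gCheck` at an upper bound for `s` gives the desired bound at `s`. -/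
lemma GS_lt_of_gCheck {n k p q fuel : ℕ} (hn : 5 ≤ n) (hk : 2 ≤ k) (hnk : n - 4 ≤ k + 2) (hp : p < q)
    (hc : gCheck n k p q fuel 0 scale 0 = true) {s : ℝ} (hs0 : 1 / 2 ≤ s)
    (hs : s ≤ (p : ℝ) / q) :
    (s - 1 / 2) * GS (((n : ℝ) - 1) / 2) ((k : ℝ) / 2) s < (k : ℝ) / 2 - 1 := by
  have hkR : (2 : ℝ) ≤ k := by exact_mod_cast hk
  have hqR : (0 : ℝ) < q := by exact_mod_cast (Nat.zero_le p).trans_lt hp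
  have hnR : (5 : ℝ) ≤ n := by exact_mod_cast hn
  obtain ⟨x, hx⟩ : ∃ x, x = (p : ℝ) / q := ⟨_, rfl⟩
  rw [← hx] at hs
  have hx0 : 0 ≤ x := by rw [hx]; positivity
  have hx1 : x < 1 := by rw [hx, div_lt_one hqR]; exact_mod_cast hp
  have hxq : x * q = p := by rw [hx]; field_simp
  set a : ℝ := ((n : ℝ) - 1) / 2 with ha
  set c : ℝ := (k : ℝ) / 2 with hcdef
  have hc0 : 0 < c := by rw [hcdef]; linarith
  have hpos := hcoef_pos (a := 1) (b := a - 3 / 2) one_pos (by linarith) hc0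
  have hR := ratioOne_hcoef 1 (a - 3 / 2) hc0
  have hsum := hR.summable (abs_lt_one_of_mem hx0 hx1)
  have key := gCheck_sound (n := n) (k := k) (p := p) (q := q) (by omega) hnk (by omega)
    (T := fun m => hcoef 1 (a - 3 / 2) c m * x ^ m)
    (fun m => mul_nonneg (hpos m).le (pow_nonneg hx0 m)) hsum (fun i => by
      have h1 : c + i ≠ 0 := by positivity
      rw [hcoef_succ 1 (a - 3 / 2) hc0 i, ← hxq, pow_succ x i]
      rw [ha, hcdef]
      push_cast [Nat.cast_sub (show 4 ≤ n by omega)]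
      field_simp
      ring) fuel 0 scale 0 hc (by simp [hcoef_zero]) (by simp)
  have hmono : GS a c s ≤ GS a c x := by
    refine (hR.summable (abs_lt_one_of_mem (by linarith) (by linarith))).tsum_le_tsum
      (fun m => ?_) hsum
    exact mul_le_mul_of_nonneg_left (pow_le_pow_left₀ (by linarith) hs m) (hpos m).le
  change _ * GS a c x < _ at key
  have hpq : ((2 * p - q : ℕ) : ℝ) = 2 * (x - 1 / 2) * q := by
    have : q ≤ 2 * p := by
      have : (q : ℝ) ≤ 2 * p := by
        rw [← hxq]
        have := mul_le_mul_of_nonneg_right (hs0.trans hs) hqR.le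
        linarith
      exact_mod_cast this
    rw [Nat.cast_sub this]
    push_cast
    rw [← hxq]; ring
  rw [hpq, Nat.cast_sub hk] at key
  have hG : 0 ≤ GS a c x := zero_le_one.trans (one_le_GS (by linarith) hc0 hx0 hx1)
  have h1 : (s - 1 / 2) * GS a c s ≤ (x - 1 / 2) * GS a c x := by
    apply mul_le_mul (by linarith) hmono _ (by linarith)
    exact zero_le_one.trans (one_le_GS (by linarith) hc0 (by linarith) (by linarith))
  have h2 : (x - 1 / 2) * GS a c x < c - 1 := by
    have h3 : (2 * q) * ((x - 1 / 2) * GS a c x) < (2 * q) * (c - 1) := by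
      rw [hcdef]
      push_cast at key
      linarith
    exact lt_of_mul_lt_mul_left h3 (by positivity)
  linarith

/-! ### The whole parameter range -/

/-- The bound on `G` at the zero of `f` in the whole parameter range. -/
lemma GS_lt {n k : ℕ} (hn : 7 ≤ n) (hk1 : n ≤ 3 * k) (hk2 : 16 * k ≤ 15 * n) (hk3 : k ≤ n - 2)
    {s : ℝ} (hs0 : 1 / 2 ≤ s) (hs1 : s < 1)
    (hz : fS (((n : ℝ) - 1) / 2) ((k : ℝ) / 2) s = 0) :
    (s - 1 / 2) * GS (((n : ℝ) - 1) / 2) ((k : ℝ) / 2) s < (k : ℝ) / 2 - 1 := by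
  have hkR : (0 : ℝ) < k := by exact_mod_cast (by omega : 0 < k)
  have hnR : (7 : ℝ) ≤ n := by exact_mod_cast hn
  -- the rational bound for the zero is available once `k ≤ n - 3`
  have hzero : k + 3 ≤ n → ∀ p q : ℕ, q = n + k - 1 → p = 2 * k → s ≤ (p : ℝ) / q := by
    intro h p q hq hp
    have hR : (k : ℝ) + 3 ≤ n := by exact_mod_cast h
    have h1 := zero_le_of_one_le (by linarith) (by linarith) (by linarith) hs1 hz
    refine h1.trans_eq ?_
    rw [hq, hp, Nat.cast_sub (by omega)]
    push_cast
    rw [div_eq_div_iff (by linarith) (by linarith)]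
    ring
  rcases le_or_gt (k + 6) n with h6 | h6
  · rcases Nat.lt_or_ge k 4 with h4 | h4
    · obtain ⟨rfl, rfl⟩ : n = 9 ∧ k = 3 := by omega
      exact GS_lt_of_gCheck (by norm_num) (by norm_num) (by norm_num) (by norm_num) gCheck_nine hs0
        (hzero (by norm_num) 6 11 (by norm_num) (by norm_num))
    · have h6R : (k : ℝ) + 6 ≤ n := by exact_mod_cast h6
      have h4R : (4 : ℝ) ≤ k := by exact_mod_cast h4
      have h3R : (n : ℝ) ≤ 3 * k := by exact_mod_cast hk1
      exact GS_lt_of_le (by linarith) (by linarith) (by linarith) hs0 hs1 hz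
  · obtain h | h | h | h : n = k + 2 ∨ n = k + 3 ∨ n = k + 4 ∨ n = k + 5 := by omega
    · obtain ⟨i, rfl⟩ : ∃ i, k = i + 5 := ⟨k - 5, by omega⟩
      subst h
      have hlt := zero_lt_of_fCheck (by omega) (by omega) (by omega)
        (fChecks_two i (by omega)) hs1 hz
      exact GS_lt_of_gCheck (by omega) (by omega) (by omega) (by omega)
        (gChecks_two i (by omega)) hs0 hlt.le
    · obtain ⟨i, rfl⟩ : ∃ i, k = i + 4 := ⟨k - 4, by omega⟩
      subst h
      exact GS_lt_of_gCheck (by omega) (by omega) (by omega) (by omega)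
        (gChecks_three i (by omega)) hs0 (hzero (by omega) _ _ (by omega) (by omega))
    · rcases Nat.lt_or_ge k 4 with h4 | h4
      · obtain rfl : k = 3 := by omega
        subst h
        -- here `2c/(a+c) = 2/3` would only give equality, hence the sharper bound `131/200`
        have hlt := zero_lt_of_fCheck (by norm_num) (by norm_num) (by norm_num)
          fCheck_seven hs1 hz
        exact GS_lt_of_gCheck (by norm_num) (by norm_num) (by norm_num) (by norm_num)
          gCheck_seven hs0 hlt.le
      · obtain ⟨i, rfl⟩ : ∃ i, k = i + 4 := ⟨k - 4, by omega⟩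
        subst h
        exact GS_lt_of_gCheck (by omega) (by omega) (by omega) (by omega)
          (gChecks_four i (by omega)) hs0 (hzero (by omega) _ _ (by omega) (by omega))
    · obtain ⟨i, rfl⟩ : ∃ i, k = i + 3 := ⟨k - 3, by omega⟩
      subst h
      exact GS_lt_of_gCheck (by omega) (by omega) (by omega) (by omega)
        (gChecks_five i (by omega)) hs0 (hzero (by omega) _ _ (by omega) (by omega))

/-- For `n ≥ 7` and `n/3 ≤ k ≤ 15n/16` with `k ≤ n-2`, the exponent
`4-n` is admissible: with `t₀` the unique zero of `f_{n,k}` in `(0,1)` and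
`g̃(t) = ₂F₁(1,(n-4)/2;k/2;t²)`, one has
`g̃'(t₀)/g̃(t₀) > ((n-2)t₀ - (k-1)t₀⁻¹)/(1-t₀²)`. -/
theorem four_sub_n_admissible_intermediate_k
    (n k : ℕ) (hn : 7 ≤ n) (hk1 : (n : ℝ) / 3 ≤ (k : ℝ))
    (hk2 : (k : ℝ) ≤ 15 * (n : ℝ) / 16) (hk3 : k ≤ n - 2)
    (t₀ : ℝ) (ht₀ : t₀ ∈ Set.Ioo (0 : ℝ) 1) (hzero : fnk n k t₀ = 0)
    (huniq : ∀ t ∈ Set.Ioo (0 : ℝ) 1, fnk n k t = 0 → t = t₀) :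
    deriv (gtil n k) t₀ / gtil n k t₀
      > (((n : ℝ) - 2) * t₀ - ((k : ℝ) - 1) * t₀⁻¹) / (1 - t₀ ^ 2) := by
  have hk1' : n ≤ 3 * k := by
    have : (n : ℝ) ≤ 3 * k := by linarith
    exact_mod_cast this
  have hk2' : 16 * k ≤ 15 * n := by
    have : 16 * (k : ℝ) ≤ 15 * n := by linarith
    exact_mod_cast this
  have hnR : (7 : ℝ) ≤ n := by exact_mod_cast hn
  have hkR : (3 : ℝ) ≤ k := by exact_mod_cast (by omega : 3 ≤ k)
  obtain ⟨h0, h1⟩ := ht₀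
  set a : ℝ := ((n : ℝ) - 1) / 2 with ha
  set c : ℝ := (k : ℝ) / 2 with hc
  have hc0 : 0 < c := by linarith
  have hs0 : 0 < t₀ ^ 2 := by positivity
  have hs1 : t₀ ^ 2 < 1 := pow_lt_one₀ h0.le h1 two_ne_zero
  have hb : ((n : ℝ) - 4) / 2 = a - 3 / 2 := by rw [ha]; ring
  have hgt : gtil n k = fun t => GS a c (t ^ 2) := by
    funext t; rw [gtil, hyp2F1_eq_psum, hb]; rfl
  have hz : fS a c (t₀ ^ 2) = 0 := hzero
  have hG := one_le_GS (a := a) (by linarith) hc0 hs0.le hs1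
  have hbound : (t₀ ^ 2 - 1 / 2) * GS a c (t₀ ^ 2) < c - 1 := by
    rcases le_total (t₀ ^ 2) (1 / 2) with h | h
    · have : (t₀ ^ 2 - 1 / 2) * GS a c (t₀ ^ 2) ≤ 0 :=
        mul_nonpos_of_nonpos_of_nonneg (by linarith) (by linarith)
      linarith
    · exact GS_lt hn hk1' hk2' hk3 h hs1 hz
  have hd : HasDerivAt (gtil n k)
      (psum (dcoef (hcoef 1 (a - 3 / 2) c)) (t₀ ^ 2) * (2 * t₀)) t₀ := by
    rw [hgt]
    have h2 := HasDerivAt.comp (h := fun t : ℝ => t ^ 2) (h₂ := GS a c) t₀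
      (GS_hasDerivAt (a := a) hc0 hs0.le hs1) (hasDerivAt_pow 2 t₀)
    exact h2.congr_deriv (by norm_num)
  have hode := ode_G (b := a - 3 / 2) hc0 (abs_lt_one_of_mem hs0.le hs1)
  change _ * (1 - _) * _ = (c - 1) - ((c - 1) - (a - 3 / 2) * _) * GS a c (t₀ ^ 2) at hode
  rw [hd.deriv, hgt]
  simp only
  set G := GS a c (t₀ ^ 2)
  set G' := psum (dcoef (hcoef 1 (a - 3 / 2) c)) (t₀ ^ 2)
  have hw : 0 < 1 - t₀ ^ 2 := by linarith
  have e1 : (((n : ℝ) - 2) * t₀ - ((k : ℝ) - 1) * t₀⁻¹) / (1 - t₀ ^ 2)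
      = (((n : ℝ) - 2) * t₀ ^ 2 - ((k : ℝ) - 1)) / (t₀ * (1 - t₀ ^ 2)) := by
    field_simp
  rw [gt_iff_lt, e1, div_lt_div_iff₀ (by positivity) (by linarith)]
  -- after multiplying out, the difference of the two sides is `2 * ((c-1) - (t₀² - 1/2) * G)`
  have e2 : G' * (2 * t₀) * (t₀ * (1 - t₀ ^ 2))
      = 2 * ((c - 1) - ((c - 1) - (a - 3 / 2) * t₀ ^ 2) * G) := by
    rw [← hode]; ring
  rw [e2, ha, hc]
  rw [hc] at hbound
  linarith
end
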